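/- arXiv:1506.02731 — 2 statements merged into one kernel-verified Lean document; each statement's English description precedes it below -/
import Mathlib

section
/- (Liouville theorem in dimensions n ≤ 4) Let 1 ≤ n ≤ 4, m ≥ 1, and let u = (u_1,…,u_m) be a bounded stable solution of the symmetric system (S) on ℝⁿ with ∂_j H_i(u(x)) ∂_i H_j(u(x)) > 0 for all i, j, x, where H_i(y) ≥ 0 for all y ∈ ℝᵐ and each i. Assume Φ satisfies Condition (A) or Condition (B), each u_i is of class C³, and each |∇u_i| ∈ L^∞(ℝⁿ) ∩ W^{1,2}_loc(ℝⁿ). Then each u_i is constant. -/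
open MeasureTheory Metric Finset Filter
open scoped RealInnerProductSpace

noncomputable section

/-- Divergence of a vector field on Euclidean space. -/
def vdiv {n : ℕ} (F : EuclideanSpace ℝ (Fin n) → EuclideanSpace ℝ (Fin n))
    (x : EuclideanSpace ℝ (Fin n)) : ℝ :=
  ∑ i, fderiv ℝ F x (EuclideanSpace.single i 1) i

/-- The linearized coefficient matrix `A(η) = 2Φ''(|η|²) η ηᵀ + Φ'(|η|²) Id`,
acting on a vector `v`. -/
def Amul {n : ℕ} (Φ : ℝ → ℝ) (η v : EuclideanSpace ℝ (Fin n)) :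
    EuclideanSpace ℝ (Fin n) :=
  (2 * deriv (deriv Φ) (‖η‖ ^ 2) * ⟪η, v⟫) • η + deriv Φ (‖η‖ ^ 2) • v

/-- Condition (A) of Caffarelli–Garofalo–Segala (mean curvature type structure). -/
def ConditionA (n : ℕ) (Φ : ℝ → ℝ) : Prop :=
  ∃ ε C₁ C₂ : ℝ, 0 ≤ ε ∧ 0 < C₁ ∧ C₁ ≤ C₂ ∧
    ∀ η : EuclideanSpace ℝ (Fin n),
      (C₁ * (ε + ‖η‖)⁻¹ ≤ deriv Φ (‖η‖ ^ 2) ∧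
        deriv Φ (‖η‖ ^ 2) ≤ C₂ * (ε + ‖η‖)⁻¹) ∧
      ∀ (ζ : EuclideanSpace ℝ (Fin n)) (zlast : ℝ), -⟪η, ζ⟫ + zlast = 0 →
        C₁ * (ε + ‖η‖)⁻¹ * (‖ζ‖ ^ 2 + zlast ^ 2) ≤ ⟪Amul Φ η ζ, ζ⟫ ∧
        ⟪Amul Φ η ζ, ζ⟫ ≤ C₂ * (ε + ‖η‖)⁻¹ * (‖ζ‖ ^ 2 + zlast ^ 2)

/-- Condition (B) of Caffarelli–Garofalo–Segala (p-Laplacian type structure). -/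
def ConditionB (n : ℕ) (Φ : ℝ → ℝ) : Prop :=
  ∃ p ε C₁ C₂ : ℝ, 1 < p ∧ 0 ≤ ε ∧ 0 < C₁ ∧ C₁ ≤ C₂ ∧
    ∀ η ζ : EuclideanSpace ℝ (Fin n),
      (C₁ * (ε + ‖η‖) ^ (p - 2) ≤ deriv Φ (‖η‖ ^ 2) ∧
        deriv Φ (‖η‖ ^ 2) ≤ C₂ * (ε + ‖η‖) ^ (p - 2)) ∧
      (C₁ * (ε + ‖η‖) ^ (p - 2) * ‖ζ‖ ^ 2 ≤ ⟪Amul Φ η ζ, ζ⟫ ∧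
        ⟪Amul Φ η ζ, ζ⟫ ≤ C₂ * (ε + ‖η‖) ^ (p - 2) * ‖ζ‖ ^ 2)

abbrev EE (n : ℕ) := EuclideanSpace ℝ (Fin n)

theorem inner_grad {n : ℕ} (f : EE n → ℝ) (x v : EE n) :
    ⟪gradient f x, v⟫ = fderiv ℝ f x v := by
  simp [gradient]

theorem integral_vdiv_zero {n : ℕ} (G : EE n → EE n) (hG : Differentiable ℝ G)
    (hc : HasCompactSupport G) (hdiv : Continuous (vdiv G)) :
    ∫ x, vdiv G x = 0 := by
  cases n with
  | zero => simp [vdiv]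
  | succ k =>
    obtain ⟨R, hR0, hR⟩ : ∃ R : ℝ, 0 < R ∧ ∀ x, G x ≠ 0 → ‖x‖ < R := by
      obtain ⟨R, hR⟩ := hc.isCompact.isBounded.subset_ball 0
      refine ⟨max R 1, by positivity, fun x hx => ?_⟩
      have := hR (subset_tsupport G hx)
      simp at this
      exact lt_of_lt_of_le this (le_max_left _ _)
    have hz : ∀ x, (∃ i, R ≤ |x i|) → G x = 0 := by
      intro x ⟨i, hi⟩
      by_contra hne
      have h1 := hR x hne
      have h2 := EuclideanSpace.norm_eq x ▸ h1
      have h3 : |x i| ≤ ‖x‖ := by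
        have := PiLp.norm_apply_le x i
        simpa using this
      linarith
    have hvz : ∀ x, x ∉ tsupport G → vdiv G x = 0 := by
      intro x hx
      have : fderiv ℝ G x = 0 := by
        have := support_fderiv_subset ℝ (f := G)
        by_contra h
        exact hx (this h)
      simp [vdiv, this]
    have hvc : HasCompactSupport (vdiv G) := HasCompactSupport.intro hc hvz
    have hvint : Integrable (vdiv G) := hdiv.integrable_of_hasCompactSupport hvc
    let T : (Fin (k+1) → ℝ) → EE (k+1) := WithLp.toLp 2
    have hT := PiLp.volume_preserving_toLp (Fin (k+1))
    have hTe : MeasurableEmbedding (WithLp.toLp 2 : (Fin (k+1) → ℝ) → EE (k+1)) :=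
      (MeasurableEquiv.toLp 2 (Fin (k+1) → ℝ)).measurableEmbedding
    rw [← hT.integral_comp hTe]
    let eL := (PiLp.continuousLinearEquiv 2 ℝ (fun _ : Fin (k+1) => ℝ))
    let f : (Fin (k+1) → ℝ) → (Fin (k+1) → ℝ) := fun y => eL (G (eL.symm y))
    let f' : (Fin (k+1) → ℝ) → (Fin (k+1) → ℝ) →L[ℝ] (Fin (k+1) → ℝ) := fun y =>
      (eL : EE (k+1) →L[ℝ] _).comp ((fderiv ℝ G (eL.symm y)).comp (eL.symm : _ →L[ℝ] EE (k+1)))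
    have hf : ∀ y, HasFDerivAt f (f' y) y := by
      intro y
      have h1 : HasFDerivAt (fun y => eL.symm y) (eL.symm : _ →L[ℝ] EE (k+1)) y := eL.symm.hasFDerivAt
      have h2 := (hG (eL.symm y)).hasFDerivAt
      have h3 : HasFDerivAt (fun z => eL z) (eL : EE (k+1) →L[ℝ] _) (G (eL.symm y)) := eL.hasFDerivAt
      exact h3.comp y (h2.comp y h1)
    have hdd : ∀ y, ∑ i, f' y (Pi.single i 1) i = vdiv G (WithLp.toLp 2 y) := by
      intro y
      simp only [vdiv]
      rfl
    have hint : Integrable (fun y => vdiv G (WithLp.toLp 2 y) : (Fin (k+1) → ℝ) → ℝ) := by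
      have := (hT.integrable_comp_emb hTe).2 hvint
      exact this
    have key := integral_divergence_of_hasFDerivAt_off_countable (fun _ => -R) (fun _ => R)
      (fun _ => by dsimp; linarith) f f' ∅ Set.countable_empty
      (fun y _ => (hf y).continuousAt.continuousWithinAt) (fun y _ => hf y)
      (by simp only [hdd]; exact hint.integrableOn)
    have hf0 : ∀ y, (∃ i, R ≤ |y i|) → f y = 0 := by
      intro y hy
      have : G (eL.symm y) = 0 := hz _ hy
      simp [f, this]
    have hrhs : ∀ (i : Fin (k+1)) (x : Fin k → ℝ) (s : ℝ), |s| = R → f (i.insertNth s x) i = 0 := by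
      intro i x s hs
      rw [hf0]
      · rfl
      · exact ⟨i, by simp [hs]⟩
    simp only [hdd] at key
    rw [← setIntegral_eq_integral_of_forall_compl_eq_zero
      (s := Set.Icc (fun _ : Fin (k+1) => -R) (fun _ => R)), key]
    · apply Finset.sum_eq_zero
      intro i _
      have h1 : ∀ x : Fin k → ℝ, f (i.insertNth R x) i = 0 := fun x => hrhs i x R (abs_of_pos hR0)
      have h2 : ∀ x : Fin k → ℝ, f (i.insertNth (-R) x) i = 0 := fun x => hrhs i x (-R) (by simp [abs_of_pos hR0])
      simp [h1, h2]
    · intro y hy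
      apply hvz
      intro hmem
      apply hy
      have h1 : closure (Function.support G) ⊆ closedBall 0 R :=
        closure_minimal (fun x hx => by simpa using (hR x hx).le) isClosed_closedBall
      have h2 := h1 hmem
      have h3 : ∀ i, |y i| ≤ R := by
        intro i
        have := PiLp.norm_apply_le (WithLp.toLp 2 y : EE (k+1)) i
        simp at this h2
        linarith
      exact ⟨fun i => (abs_le.1 (h3 i)).1, fun i => (abs_le.1 (h3 i)).2⟩

theorem vdiv_smul {n : ℕ} (F : EE n → EE n) (ψ : EE n → ℝ) (x : EE n)
    (hF : DifferentiableAt ℝ F x) (hψ : DifferentiableAt ℝ ψ x) :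
    vdiv (fun y => ψ y • F y) x = ψ x * vdiv F x + fderiv ℝ ψ x (F x) := by
  have h := fderiv_fun_smul hψ hF
  simp only [vdiv, h]
  have : F x = ∑ i, F x i • EuclideanSpace.single i (1:ℝ) := by
    ext j
    simp [Finset.sum_apply, Pi.single_apply]
  conv_rhs => rw [this]
  simp [Finset.sum_add_distrib, Finset.mul_sum, map_sum, mul_comm]

theorem ibp {n : ℕ} (F : EE n → EE n) (hF : Differentiable ℝ F) (hd : Continuous (vdiv F))
    (ψ : EE n → ℝ) (hψ : ContDiff ℝ 1 ψ) (hc : HasCompactSupport ψ) :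
    ∫ x, fderiv ℝ ψ x (F x) = - ∫ x, ψ x * vdiv F x := by
  have hψd := hψ.differentiable one_ne_zero
  have hψc := hψ.continuous_fderiv one_ne_zero
  have e : vdiv (fun y => ψ y • F y) = fun x => ψ x * vdiv F x + fderiv ℝ ψ x (F x) := by
    ext x; exact vdiv_smul F ψ x (hF x) (hψd x)
  have c1 : Continuous (fun x => ψ x * vdiv F x) := hψ.continuous.mul hd
  have c2 : Continuous (fun x => fderiv ℝ ψ x (F x)) := hψc.clm_apply hF.continuous
  have i1 : Integrable (fun x => ψ x * vdiv F x) :=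
    c1.integrable_of_hasCompactSupport hc.mul_right
  have i2 : Integrable (fun x => fderiv ℝ ψ x (F x)) := by
    apply c2.integrable_of_hasCompactSupport
    refine (hc.fderiv (𝕜 := ℝ)).mono ?_
    intro x hx h
    apply hx
    simp [h]
  have := integral_vdiv_zero (fun y => ψ y • F y) (hψd.smul hF) hc.smul_right
    (by rw [e]; exact c1.add c2)
  rw [e, integral_add i1 i2] at this
  linarith


theorem contDiff_gradient {n : ℕ} {k : ℕ} (f : EE n → ℝ) (hf : ContDiff ℝ (k+1 : ℕ) f) :
    ContDiff ℝ k (gradient f) := by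
  have h1 : ContDiff ℝ k (fderiv ℝ f) := hf.fderiv_right (by norm_cast)
  exact (InnerProductSpace.toDual ℝ (EE n)).symm.contDiff.comp h1

theorem contDiff_D {n : ℕ} {k : ℕ} (f : EE n → ℝ) (hf : ContDiff ℝ (k+1 : ℕ) f) (e : EE n) :
    ContDiff ℝ k (fun y => fderiv ℝ f y e) := by
  have h1 : ContDiff ℝ k (fderiv ℝ f) := hf.fderiv_right (by norm_cast)
  exact h1.clm_apply contDiff_const

theorem fderiv_D {n : ℕ} (f : EE n → ℝ) (hf : ContDiff ℝ 2 f) (x e v : EE n) :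
    fderiv ℝ (fun y => fderiv ℝ f y e) x v = fderiv ℝ (fderiv ℝ f) x e v := by
  have h1 : ContDiff ℝ 1 (fderiv ℝ f) := hf.fderiv_right (by norm_num)
  have h2 := (h1.differentiable one_ne_zero x).hasFDerivAt
  have h3 := h2.clm_apply (hasFDerivAt_const e x)
  rw [h3.fderiv]
  have hs : IsSymmSndFDerivAt ℝ f x := hf.contDiffAt.isSymmSndFDerivAt (by simp)
  simp [hs v e]

theorem fderiv_gradient {n : ℕ} (f : EE n → ℝ) (hf : ContDiff ℝ 2 f) (x e : EE n) :
    fderiv ℝ (gradient f) x e = gradient (fun y => fderiv ℝ f y e) x := by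
  have h1 : ContDiff ℝ 1 (fderiv ℝ f) := hf.fderiv_right (by norm_num)
  have h2 := (h1.differentiable one_ne_zero x).hasFDerivAt
  have h3 : HasFDerivAt (gradient f) _ x :=
    ((InnerProductSpace.toDual ℝ (EE n)).symm.toContinuousLinearEquiv.hasFDerivAt).comp x h2
  refine ext_inner_right ℝ fun v => ?_
  rw [inner_grad, fderiv_D f hf, h3.fderiv]
  simp

theorem fderiv_flux {n : ℕ} (Φ : ℝ → ℝ) (hΦ : ContDiff ℝ 2 Φ) (g : EE n → EE n) (x e : EE n)
    (hg : DifferentiableAt ℝ g x) :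
    fderiv ℝ (fun y => deriv Φ (‖g y‖ ^ 2) • g y) x e = Amul Φ (g x) (fderiv ℝ g x e) := by
  have hd : ContDiff ℝ 1 (deriv Φ) := ((contDiff_succ_iff_deriv (n := 1)).1 hΦ).2.2
  have h1 := (hd.differentiable one_ne_zero (‖g x‖ ^ 2)).hasDerivAt
  have h2 := hg.hasFDerivAt.norm_sq
  have h3 := h1.comp_hasFDerivAt x h2
  have h4 := h3.smul hg.hasFDerivAt
  have : fderiv ℝ (fun y => deriv Φ (‖g y‖ ^ 2) • g y) x = _ := h4.fderiv
  rw [this]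
  simp [Amul, add_comm, mul_assoc, mul_comm, mul_left_comm]

theorem contDiff_flux {n : ℕ} (Φ : ℝ → ℝ) (hΦ : ContDiff ℝ 2 Φ) (g : EE n → EE n)
    (hg : ContDiff ℝ 1 g) :
    ContDiff ℝ 1 (fun y => deriv Φ (‖g y‖ ^ 2) • g y) := by
  have hd : ContDiff ℝ 1 (deriv Φ) := ((contDiff_succ_iff_deriv (n := 1)).1 hΦ).2.2
  exact (hd.comp (hg.norm_sq ℝ)).smul hg

theorem continuous_vdiv {n : ℕ} (F : EE n → EE n) (hF : ContDiff ℝ 1 F) : Continuous (vdiv F) := by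
  have := hF.continuous_fderiv one_ne_zero
  unfold vdiv
  refine continuous_finsetSum _ fun i _ => ?_
  have h := this.clm_apply (continuous_const (y := EuclideanSpace.single i (1:ℝ)))
  fun_prop

theorem integral_D_zero {n : ℕ} (ψ : EE n → ℝ) (hψ : ContDiff ℝ 1 ψ) (hc : HasCompactSupport ψ)
    (e : EE n) : ∫ x, fderiv ℝ ψ x e = 0 := by
  have h0 : vdiv (fun _ : EE n => e) = fun _ => 0 := by ext x; simp [vdiv]
  have := ibp (fun _ => e) (differentiable_const e) (by rw [h0]; exact continuous_const) ψ hψ hc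
  rw [this, h0]; simp

theorem hcs_fderiv_apply {n : ℕ} (ψ : EE n → ℝ) (hc : HasCompactSupport ψ) (F : EE n → EE n) :
    HasCompactSupport (fun x => fderiv ℝ ψ x (F x)) := by
  refine (hc.fderiv (𝕜 := ℝ)).mono ?_
  intro x hx h
  apply hx
  simp [h]

theorem weak_lin {n : ℕ} (Φ : ℝ → ℝ) (hΦ : ContDiff ℝ 2 Φ) (u : EE n → ℝ) (hu : ContDiff ℝ 3 u)
    (h : EE n → ℝ) (hh : ContDiff ℝ 1 h)
    (heq : ∀ x, -vdiv (fun y => deriv Φ (‖gradient u y‖ ^ 2) • gradient u y) x = h x)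
    (ψ : EE n → ℝ) (hψ : ContDiff ℝ 2 ψ) (hc : HasCompactSupport ψ) (e : EE n) :
    ∫ x, fderiv ℝ ψ x (Amul Φ (gradient u x) (gradient (fun y => fderiv ℝ u y e) x))
      = ∫ x, ψ x * fderiv ℝ h x e := by
  have hu2 : ContDiff ℝ 2 u := hu.of_le (by norm_num)
  have hg : ContDiff ℝ 1 (gradient u) := contDiff_gradient (k := 1) u hu2
  set F : EE n → EE n := fun y => deriv Φ (‖gradient u y‖ ^ 2) • gradient u y with hFdef
  have hF : ContDiff ℝ 1 F := contDiff_flux Φ hΦ _ hg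
  have hFd := hF.differentiable one_ne_zero
  have hA : ∀ x, Amul Φ (gradient u x) (gradient (fun y => fderiv ℝ u y e) x) = fderiv ℝ F x e := by
    intro x
    rw [hFdef, fderiv_flux Φ hΦ _ x e (hg.differentiable one_ne_zero x), fderiv_gradient u hu2]
  simp only [hA]
  have hψ1 : ContDiff ℝ 1 ψ := hψ.of_le (by norm_num)
  have hfψ : ContDiff ℝ 1 (fderiv ℝ ψ) := hψ.fderiv_right (by norm_num)
  have hDψ : ContDiff ℝ 1 (fun y => fderiv ℝ ψ y e) := contDiff_D (k := 1) ψ hψ e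
  have hDc : HasCompactSupport (fun y => fderiv ℝ ψ y e) := hcs_fderiv_apply ψ hc (fun _ => e)
  have s1 := integral_D_zero (fun y => fderiv ℝ ψ y (F y)) (hfψ.clm_apply hF)
    (hcs_fderiv_apply ψ hc F) e
  have e1 : ∀ x, fderiv ℝ (fun y => fderiv ℝ ψ y (F y)) x e
      = fderiv ℝ (fun y => fderiv ℝ ψ y e) x (F x) + fderiv ℝ ψ x (fderiv ℝ F x e) := by
    intro x
    have h2 := ((hfψ.differentiable one_ne_zero x).hasFDerivAt).clm_apply (hFd x).hasFDerivAt
    rw [h2.fderiv, fderiv_D ψ hψ]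
    simp [add_comm]
  simp only [e1] at s1
  have cF : Continuous (fun x => fderiv ℝ F x e) :=
    (hF.continuous_fderiv one_ne_zero).clm_apply continuous_const
  have i1 : Integrable (fun x => fderiv ℝ (fun y => fderiv ℝ ψ y e) x (F x)) :=
    ((hDψ.continuous_fderiv one_ne_zero).clm_apply hF.continuous).integrable_of_hasCompactSupport
      (hcs_fderiv_apply _ hDc F)
  have i2 : Integrable (fun x => fderiv ℝ ψ x (fderiv ℝ F x e)) :=
    (hfψ.continuous.clm_apply cF).integrable_of_hasCompactSupport
      (hcs_fderiv_apply _ hc _)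
  rw [integral_add i1 i2, ibp F hFd (continuous_vdiv F hF) _ hDψ hDc] at s1
  have s2 := integral_D_zero (fun y => ψ y * h y) (hψ1.mul hh) hc.mul_right e
  have e2 : ∀ x, fderiv ℝ (fun y => ψ y * h y) x e = ψ x * fderiv ℝ h x e + fderiv ℝ ψ x e * h x := by
    intro x
    rw [fderiv_fun_mul (hψ1.differentiable one_ne_zero x) (hh.differentiable one_ne_zero x)]
    simp [mul_comm]
  simp only [e2] at s2
  have i3 : Integrable (fun x => ψ x * fderiv ℝ h x e) :=
    (hψ.continuous.mul ((hh.continuous_fderiv one_ne_zero).clm_apply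
      continuous_const)).integrable_of_hasCompactSupport hc.mul_right
  have i4 : Integrable (fun x => fderiv ℝ ψ x e * h x) :=
    (hDψ.continuous.mul hh.continuous).integrable_of_hasCompactSupport hDc.mul_right
  rw [integral_add i3 i4] at s2
  have e3 : ∀ x, fderiv ℝ ψ x e * vdiv F x = - (fderiv ℝ ψ x e * h x) := by
    intro x; rw [← heq x]; ring
  simp only [e3, integral_neg] at s1
  linarith


theorem exists_cutoff (n : ℕ) (hn : n ≤ 4) : ∃ L : ℝ, 0 ≤ L ∧ ∀ R : ℝ, 1 ≤ R →
    ∃ ζ : EE n → ℝ, ContDiff ℝ 2 ζ ∧ HasCompactSupport ζ ∧ (∀ x, 0 ≤ ζ x) ∧ (∀ x, ζ x ≤ 1) ∧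
      (∀ x, ‖x‖ ≤ R → ζ x = 1) ∧ (∀ x, 2 * R ≤ ‖x‖ → ζ x = 0) ∧
      (∀ x, ‖gradient ζ x‖ ≤ L / R) ∧
      (∀ x, gradient ζ x ≠ 0 → R < ‖x‖ ∧ ‖x‖ < 2 * R) ∧
      ∫ x, ‖gradient ζ x‖ ^ 2 ≤ L * R ^ 2 := by
  let b : ContDiffBump (0 : EE n) := ⟨1, 2, one_pos, one_lt_two⟩
  have hb : ContDiff ℝ 2 b := b.contDiff
  have hbc : HasCompactSupport b := b.hasCompactSupport
  obtain ⟨L, hL⟩ := (hb.continuous_fderiv two_ne_zero).bounded_above_of_compact_support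
    (hbc.fderiv (𝕜 := ℝ))
  have hL0 : 0 ≤ L := (norm_nonneg _).trans (hL 0)
  set v := (volume : Measure (EE n)).real (ball 0 1) with hv
  have hv0 : 0 ≤ v := measureReal_nonneg
  refine ⟨max L (16 * L ^ 2 * v), le_max_of_le_left hL0, fun R hR => ?_⟩
  have hR0 : 0 < R := by linarith
  let ζ : EE n → ℝ := fun x => b (R⁻¹ • x)
  have hζ : ContDiff ℝ 2 ζ := hb.comp (contDiff_const_smul R⁻¹)
  have hn' : ∀ x : EE n, ‖R⁻¹ • x‖ = ‖x‖ / R := by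
    intro x; rw [norm_smul, Real.norm_of_nonneg (by positivity)]; field_simp
  have h1 : ∀ x, ‖x‖ ≤ R → ζ x = 1 := by
    intro x hx
    apply b.one_of_mem_closedBall
    simp only [mem_closedBall, dist_zero_right, hn']
    exact (div_le_one hR0).2 hx
  have h0 : ∀ x, 2 * R ≤ ‖x‖ → ζ x = 0 := by
    intro x hx
    apply b.zero_of_le_dist
    simp only [dist_zero_right, hn']
    exact (le_div_iff₀ hR0).2 hx
  have hnn : ∀ x, 0 ≤ ζ x := fun x => b.nonneg
  have hle : ∀ x, ζ x ≤ 1 := fun x => b.le_one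
  have hcs : HasCompactSupport ζ := by
    refine HasCompactSupport.intro (isCompact_closedBall (0 : EE n) (2 * R)) fun x hx => h0 x ?_
    simp at hx; exact hx.le
  have hgn : ∀ x, ‖gradient ζ x‖ = ‖fderiv ℝ ζ x‖ := by intro x; simp [gradient]
  have hgL : ∀ x, ‖gradient ζ x‖ ≤ L / R := by
    intro x
    rw [hgn]
    have h2 : HasFDerivAt (fun x : EE n => R⁻¹ • x) (R⁻¹ • ContinuousLinearMap.id ℝ (EE n)) x :=
      (hasFDerivAt_id x).const_smul R⁻¹
    have h3 : HasFDerivAt ζ ((fderiv ℝ b (R⁻¹ • x)).comp (R⁻¹ • ContinuousLinearMap.id ℝ (EE n))) x :=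
      ((hb.differentiable two_ne_zero (R⁻¹ • x)).hasFDerivAt).comp x h2
    rw [h3.fderiv, ContinuousLinearMap.comp_smul, ContinuousLinearMap.comp_id, norm_smul,
      Real.norm_of_nonneg (by positivity), div_eq_inv_mul]
    exact mul_le_mul_of_nonneg_left (hL _) (by positivity)
  have hgz : ∀ x, gradient ζ x ≠ 0 → R < ‖x‖ ∧ ‖x‖ < 2 * R := by
    intro x hx
    by_contra hcon
    apply hx
    have : fderiv ℝ ζ x = 0 := by
      by_cases hxR : ‖x‖ ≤ R
      · apply IsLocalMax.fderiv_eq_zero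
        refine Filter.Eventually.of_forall fun y => ?_
        rw [h1 x hxR]; exact hle y
      · have : 2 * R ≤ ‖x‖ := by
          by_contra h; exact hcon ⟨by linarith, by linarith⟩
        apply IsLocalMin.fderiv_eq_zero
        refine Filter.Eventually.of_forall fun y => ?_
        rw [h0 x this]; exact hnn y
    simp [gradient, this]
  refine ⟨ζ, hζ, hcs, hnn, hle, h1, h0, fun x => (hgL x).trans ?_, hgz, ?_⟩
  · gcongr; exact le_max_left _ _
  · have hz : ∀ x, x ∉ closedBall (0 : EE n) (2 * R) → ‖gradient ζ x‖ ^ 2 = 0 := by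
      intro x hx
      by_contra h
      have hne : gradient ζ x ≠ 0 := by intro h'; simp [h'] at h
      apply hx
      simpa using (hgz x hne).2.le
    rw [← setIntegral_eq_integral_of_forall_compl_eq_zero hz]
    have hbd : ‖∫ x in closedBall (0 : EE n) (2 * R), ‖gradient ζ x‖ ^ 2‖
        ≤ (L / R) ^ 2 * volume.real (closedBall (0 : EE n) (2 * R)) := by
      apply norm_setIntegral_le_of_norm_le_const
      · exact measure_closedBall_lt_top
      · intro x _
        rw [Real.norm_of_nonneg (by positivity)]
        exact pow_le_pow_left₀ (norm_nonneg _) (hgL x) 2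
    rw [Measure.addHaar_real_closedBall _ _ (by positivity)] at hbd
    simp only [finrank_euclideanSpace, Fintype.card_fin] at hbd
    refine (le_abs_self _).trans (hbd.trans ?_)
    have h4 : (2 * R) ^ n ≤ (2 * R) ^ 4 := pow_le_pow_right₀ (by linarith) hn
    calc (L / R) ^ 2 * ((2 * R) ^ n * v) ≤ (L / R) ^ 2 * ((2 * R) ^ 4 * v) := by gcongr
      _ = 16 * L ^ 2 * v * R ^ 2 := by field_simp; ring
      _ ≤ _ := by gcongr; exact le_max_right _ _

theorem energy {n : ℕ} (hn : n ≤ 4) (Φ : ℝ → ℝ) (hΦ : ContDiff ℝ 2 Φ) (u : EE n → ℝ)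
    (hu : ContDiff ℝ 2 u) (h : EE n → ℝ) (hh : ∀ x, 0 ≤ h x)
    (heq : ∀ x, -vdiv (fun y => deriv Φ (‖gradient u y‖ ^ 2) • gradient u y) x = h x)
    (M : ℝ) (hM : ∀ x, |u x| ≤ M) (hP0 : ∀ x, 0 ≤ deriv Φ (‖gradient u x‖ ^ 2))
    (K : ℝ) (hK : ∀ x, deriv Φ (‖gradient u x‖ ^ 2) ≤ K) :
    ∃ C : ℝ, 0 ≤ C ∧ ∀ R : ℝ, 1 ≤ R →
      ∫ x in ball (0 : EE n) R, deriv Φ (‖gradient u x‖ ^ 2) * ‖gradient u x‖ ^ 2 ≤ C * R ^ 2 := by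
  obtain ⟨L, hL0, hL⟩ := exists_cutoff n hn
  have hK0 : 0 ≤ K := (hP0 0).trans (hK 0)
  have hM0 : 0 ≤ M := (abs_nonneg _).trans (hM 0)
  refine ⟨16 * M ^ 2 * K * L, by positivity, fun R hR => ?_⟩
  obtain ⟨ζ, hζ, hcs, hnn, hle, h1, h0, hgL, hgz, hint⟩ := hL R hR
  have hu1 : ContDiff ℝ 1 u := hu.of_le (by norm_num)
  have hζ1 : ContDiff ℝ 1 ζ := hζ.of_le (by norm_num)
  have hg : ContDiff ℝ 1 (gradient u) := contDiff_gradient (k := 1) u hu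
  have hgζ : ContDiff ℝ 1 (gradient ζ) := contDiff_gradient (k := 1) ζ hζ
  have hd : Continuous (deriv Φ) := hΦ.continuous_deriv (by norm_num)
  set F : EE n → EE n := fun y => deriv Φ (‖gradient u y‖ ^ 2) • gradient u y with hFdef
  have hF : ContDiff ℝ 1 F := contDiff_flux Φ hΦ _ hg
  let ψ : EE n → ℝ := fun x => (M - u x) * ζ x ^ 2
  have hψ : ContDiff ℝ 1 ψ := (contDiff_const.sub hu1).mul (hζ1.pow 2)
  have hψc : HasCompactSupport ψ := by
    refine HasCompactSupport.mul_left ?_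
    refine hcs.mono ?_
    intro x hx h; apply hx; simp [h]
  have key := ibp F (hF.differentiable one_ne_zero) (continuous_vdiv F hF) ψ hψ hψc
  have hpos : 0 ≤ ∫ x, fderiv ℝ ψ x (F x) := by
    rw [key, ← integral_neg]
    refine integral_nonneg fun x => ?_
    have : vdiv F x = - h x := by rw [← heq x]; ring
    have h3 : 0 ≤ M - u x := by linarith [(abs_le.1 (hM x)).2]
    simp only [this]
    have := hh x
    simp only [ψ, Pi.zero_apply]
    have : 0 ≤ (M - u x) * ζ x ^ 2 * h x := by positivity
    linarith
  have hpt : ∀ x, fderiv ℝ ψ x (F x) ≤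
      - (1/2) * (ζ x ^ 2 * (deriv Φ (‖gradient u x‖ ^ 2) * ‖gradient u x‖ ^ 2))
        + 8 * M ^ 2 * K * ‖gradient ζ x‖ ^ 2 := by
    intro x
    have hd1 : HasFDerivAt ψ _ x :=
      (((hu1.differentiable one_ne_zero x).hasFDerivAt).const_sub M).mul
        (((hζ1.differentiable one_ne_zero x).hasFDerivAt).pow 2)
    rw [hd1.fderiv]
    have e1 : fderiv ℝ u x (F x) = deriv Φ (‖gradient u x‖ ^ 2) * ‖gradient u x‖ ^ 2 := by
      rw [← inner_grad, hFdef]; simp [inner_smul_right]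
    have e2 : fderiv ℝ ζ x (F x) = deriv Φ (‖gradient u x‖ ^ 2) * ⟪gradient ζ x, gradient u x⟫ := by
      rw [← inner_grad, hFdef]; simp [inner_smul_right]
    simp only [add_apply, smul_apply,
      neg_apply, smul_eq_mul, e1, e2]
    set P := deriv Φ (‖gradient u x‖ ^ 2)
    have hP : 0 ≤ P := hP0 x
    have hPK : P ≤ K := hK x
    have hcs' := abs_real_inner_le_norm (gradient ζ x) (gradient u x)
    set g := ‖gradient u x‖
    set z := ‖gradient ζ x‖
    set I := ⟪gradient ζ x, gradient u x⟫
    have hMu0 : 0 ≤ M - u x := by linarith [(abs_le.1 (hM x)).2]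
    have hMu1 : M - u x ≤ 2 * M := by linarith [(abs_le.1 (hM x)).1]
    have hI : I ≤ z * g := (le_abs_self _).trans hcs'
    have s1 : 2 * ((M - u x) * ζ x) * I ≤ 1/2 * (ζ x ^ 2 * g ^ 2) + 2 * (2 * M) ^ 2 * z ^ 2 := by
      have a1 : 2 * ((M - u x) * ζ x) * I ≤ 2 * ((M - u x) * ζ x) * (z * g) := by
        have := hnn x
        gcongr
      have a2 : (M - u x) ^ 2 * z ^ 2 ≤ (2 * M) ^ 2 * z ^ 2 := by gcongr
      nlinarith [sq_nonneg (ζ x * g - 2 * (M - u x) * z)]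
    have s2 := mul_le_mul_of_nonneg_left s1 hP
    have s3 : P * (2 * (2 * M) ^ 2 * z ^ 2) ≤ K * (2 * (2 * M) ^ 2 * z ^ 2) := by gcongr
    simp
    nlinarith
  have cP : Continuous (fun x => deriv Φ (‖gradient u x‖ ^ 2) * ‖gradient u x‖ ^ 2) :=
    (hd.comp (hg.continuous.norm.pow 2)).mul (hg.continuous.norm.pow 2)
  have hcs2 : HasCompactSupport (fun x => ζ x ^ 2) := by
    refine hcs.mono ?_
    intro x hx h; apply hx; simp [h]
  have i1 : Integrable (fun x => ζ x ^ 2 * (deriv Φ (‖gradient u x‖ ^ 2) * ‖gradient u x‖ ^ 2)) :=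
    ((hζ.continuous.pow 2).mul cP).integrable_of_hasCompactSupport hcs2.mul_right
  have i2 : Integrable (fun x => ‖gradient ζ x‖ ^ 2) := by
    refine (hgζ.continuous.norm.pow 2).integrable_of_hasCompactSupport ?_
    refine (hcs.fderiv (𝕜 := ℝ)).mono ?_
    intro x hx h
    apply hx
    simp [gradient, h]
  have i3 : Integrable (fun x => fderiv ℝ ψ x (F x)) :=
    ((hψ.continuous_fderiv one_ne_zero).clm_apply hF.continuous).integrable_of_hasCompactSupport
      (hcs_fderiv_apply _ hψc F)
  have hmono := (integral_mono i3 ((i1.const_mul (-(1/2))).add (i2.const_mul (8 * M ^ 2 * K)))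
    hpt).trans_eq (integral_add (i1.const_mul (-(1/2))) (i2.const_mul (8 * M ^ 2 * K)))
  rw [integral_const_mul, integral_const_mul] at hmono
  have hball : ∫ x in ball (0 : EE n) R, deriv Φ (‖gradient u x‖ ^ 2) * ‖gradient u x‖ ^ 2
      ≤ ∫ x, ζ x ^ 2 * (deriv Φ (‖gradient u x‖ ^ 2) * ‖gradient u x‖ ^ 2) := by
    have : ∫ x in ball (0 : EE n) R, deriv Φ (‖gradient u x‖ ^ 2) * ‖gradient u x‖ ^ 2
      = ∫ x in ball (0 : EE n) R, ζ x ^ 2 * (deriv Φ (‖gradient u x‖ ^ 2) * ‖gradient u x‖ ^ 2) := by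
      refine setIntegral_congr_fun measurableSet_ball fun x hx => ?_
      have : ζ x = 1 := h1 x (by simpa using (mem_ball_zero_iff.1 hx).le)
      simp [this]
    rw [this]
    refine setIntegral_le_integral i1 (Filter.Eventually.of_forall fun x => ?_)
    have := hP0 x
    simp only [Pi.zero_apply]
    positivity
  have : 8 * M ^ 2 * K * ∫ x, ‖gradient ζ x‖ ^ 2 ≤ 8 * M ^ 2 * K * (L * R ^ 2) := by gcongr
  nlinarith


theorem inner_Amul {n : ℕ} (Φ : ℝ → ℝ) (η v w : EE n) :
    ⟪Amul Φ η v, w⟫ = 2 * deriv (deriv Φ) (‖η‖ ^ 2) * ⟪η, v⟫ * ⟪η, w⟫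
      + deriv Φ (‖η‖ ^ 2) * ⟪v, w⟫ := by
  simp only [Amul, inner_add_left, real_inner_smul_left]

theorem picone_alg {n : ℕ} (Φ : ℝ → ℝ) (η s q z : EE n) (σ φ ζ : ℝ) :
    ⟪(ζ * ζ) • (σ • s + φ • q) + (2 * (σ * φ) * ζ) • z, Amul Φ η (σ • s + φ • q)⟫
      - ⟪σ • ((ζ * ζ) • (σ • s + φ • q) + (2 * (σ * φ) * ζ) • z) + (σ * φ * (ζ * ζ)) • q,
          Amul Φ η s⟫
      = ζ ^ 2 * (φ ^ 2 * ⟪Amul Φ η q, q⟫) + 2 * (σ * φ) * φ * ζ * ⟪Amul Φ η q, z⟫ := by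
  rw [real_inner_comm, real_inner_comm (Amul Φ η s)]
  simp only [inner_Amul, inner_add_left, inner_add_right, real_inner_smul_left,
    real_inner_smul_right]
  rw [real_inner_comm q s]
  ring

theorem Amul_young {n : ℕ} (Φ : ℝ → ℝ) (η q z : EE n) (hpsd : ∀ v : EE n, 0 ≤ ⟪Amul Φ η v, v⟫)
    (w φ ζ δ : ℝ) (hδ : 0 < δ) :
    -(2 * w * φ * ζ * ⟪Amul Φ η q, z⟫) ≤
      δ * (ζ ^ 2 * (φ ^ 2 * ⟪Amul Φ η q, q⟫)) + δ⁻¹ * (w ^ 2 * ⟪Amul Φ η z, z⟫) := by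
  have h := hpsd ((δ * ζ * φ) • q + w • z)
  have e : ⟪Amul Φ η ((δ * ζ * φ) • q + w • z), (δ * ζ * φ) • q + w • z⟫
      = δ * (δ * (ζ ^ 2 * (φ ^ 2 * ⟪Amul Φ η q, q⟫)) + δ⁻¹ * (w ^ 2 * ⟪Amul Φ η z, z⟫)
        + 2 * w * φ * ζ * ⟪Amul Φ η q, z⟫) := by
    simp only [inner_Amul, inner_add_left, inner_add_right, real_inner_smul_left,
      real_inner_smul_right]
    rw [real_inner_comm q z]
    field_simp
    ring
  rw [e] at h
  have h2 := nonneg_of_mul_nonneg_right h hδ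
  linarith

theorem grad_mul {n : ℕ} (f g : EE n → ℝ) (x : EE n) (hf : DifferentiableAt ℝ f x)
    (hg : DifferentiableAt ℝ g x) :
    gradient (fun y => f y * g y) x = f x • gradient g x + g x • gradient f x := by
  refine ext_inner_right ℝ fun v => ?_
  rw [inner_grad, fderiv_fun_mul hf hg]
  simp [inner_add_left, real_inner_smul_left]

theorem Amul_continuous {n : ℕ} (Φ : ℝ → ℝ) (hΦ : ContDiff ℝ 2 Φ) (g v : EE n → EE n)
    (hg : Continuous g) (hv : Continuous v) : Continuous (fun x => Amul Φ (g x) (v x)) := by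
  have hd1 : ContDiff ℝ 1 (deriv Φ) := ((contDiff_succ_iff_deriv (n := 1)).1 hΦ).2.2
  have hd0 := hd1.continuous
  have hd2 : Continuous (deriv (deriv Φ)) := hd1.continuous_deriv (by norm_num)
  unfold Amul
  have h2 := hd2.comp (hg.norm.pow 2)
  have h1 := hd0.comp (hg.norm.pow 2)
  exact ((((continuous_const (y := (2:ℝ))).mul h2).mul (hg.inner hv)).smul hg).add (h1.smul hv)

theorem picone {n : ℕ} (Φ : ℝ → ℝ) (hΦ : ContDiff ℝ 2 Φ) (u : EE n → ℝ) (hu : ContDiff ℝ 3 u)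
    (h : EE n → ℝ) (hh : ContDiff ℝ 1 h)
    (heq : ∀ x, -vdiv (fun y => deriv Φ (‖gradient u y‖ ^ 2) • gradient u y) x = h x)
    (φ : EE n → ℝ) (hφ : ContDiff ℝ 2 φ) (hφ0 : ∀ x, φ x ≠ 0)
    (r : EE n → ℝ) (hr : Continuous r)
    (hFd : Differentiable ℝ (fun y => Amul Φ (gradient u y) (gradient φ y)))
    (hφeq : ∀ x, -vdiv (fun y => Amul Φ (gradient u y) (gradient φ y)) x = r x)
    (ζ : EE n → ℝ) (hζ : ContDiff ℝ 2 ζ) (hc : HasCompactSupport ζ) (e : EE n)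
    (w σ : EE n → ℝ) (hw : w = fun x => fderiv ℝ u x e) (hσ : σ = fun x => w x / φ x) :
    ∫ x, (ζ x ^ 2 * (φ x ^ 2 * ⟪Amul Φ (gradient u x) (gradient σ x), gradient σ x⟫)
        + 2 * w x * φ x * ζ x * ⟪Amul Φ (gradient u x) (gradient σ x), gradient ζ x⟫)
      = ∫ x, ζ x ^ 2 * (w x * fderiv ℝ h x e - σ x * w x * r x) := by
  have hw2 : ContDiff ℝ 2 w := by rw [hw]; exact contDiff_D (k := 2) u hu e
  have hσ2 : ContDiff ℝ 2 σ := by rw [hσ]; exact hw2.div hφ hφ0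
  have hwσ : ∀ x, w x = σ x * φ x := by
    intro x; rw [hσ]; field_simp [hφ0 x]
  have hwσ' : w = fun x => σ x * φ x := funext hwσ
  let ψ : EE n → ℝ := fun x => w x * (ζ x * ζ x)
  have hψ : ContDiff ℝ 2 ψ := hw2.mul (hζ.mul hζ)
  have hψc : HasCompactSupport ψ := (hc.mul_left (f := ζ)).mul_left
  let χ : EE n → ℝ := fun x => σ x * ψ x
  have hχ : ContDiff ℝ 2 χ := hσ2.mul hψ
  have hχc : HasCompactSupport χ := hψc.mul_left
  have dσ := hσ2.differentiable two_ne_zero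
  have dφ := hφ.differentiable two_ne_zero
  have dζ := hζ.differentiable two_ne_zero
  have dw := hw2.differentiable two_ne_zero
  have dψ := hψ.differentiable two_ne_zero
  have gw : ∀ x, gradient w x = σ x • gradient φ x + φ x • gradient σ x := by
    intro x
    have := grad_mul σ φ x (dσ x) (dφ x)
    rw [← hwσ'] at this
    exact this
  have gψ : ∀ x, gradient ψ x = (ζ x * ζ x) • gradient w x + (2 * w x * ζ x) • gradient ζ x := by
    intro x
    have h1 : gradient ψ x = _ := grad_mul w (fun y => ζ y * ζ y) x (dw x) ((dζ x).mul (dζ x))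
    rw [h1, grad_mul ζ ζ x (dζ x) (dζ x)]
    module
  have gχ : ∀ x, gradient χ x = σ x • gradient ψ x + ψ x • gradient σ x :=
    fun x => grad_mul σ ψ x (dσ x) (dψ x)
  have eq1 := weak_lin Φ hΦ u hu h hh heq ψ hψ hψc e
  rw [← hw] at eq1
  have hvd : vdiv (fun y => Amul Φ (gradient u y) (gradient φ y)) = fun x => - r x := by
    ext x; rw [← hφeq x]; ring
  have eq2 := ibp _ hFd (by rw [hvd]; exact hr.neg) χ (hχ.of_le (by norm_num)) hχc
  have cgu : Continuous (gradient u) := (contDiff_gradient (k := 2) u hu).continuous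
  have cgw : Continuous (gradient w) := (contDiff_gradient (k := 1) w hw2).continuous
  have cgφ : Continuous (gradient φ) := (contDiff_gradient (k := 1) φ hφ).continuous
  have i1 : Integrable (fun x => fderiv ℝ ψ x (Amul Φ (gradient u x) (gradient w x))) :=
    ((hψ.continuous_fderiv two_ne_zero).clm_apply
      (Amul_continuous Φ hΦ _ _ cgu cgw)).integrable_of_hasCompactSupport
      (hcs_fderiv_apply _ hψc _)
  have i2 : Integrable (fun x => fderiv ℝ χ x (Amul Φ (gradient u x) (gradient φ x))) :=
    ((hχ.continuous_fderiv two_ne_zero).clm_apply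
      (Amul_continuous Φ hΦ _ _ cgu cgφ)).integrable_of_hasCompactSupport
      (hcs_fderiv_apply _ hχc _)
  have i3 : Integrable (fun x => ψ x * fderiv ℝ h x e) :=
    (hψ.continuous.mul ((hh.continuous_fderiv one_ne_zero).clm_apply
      continuous_const)).integrable_of_hasCompactSupport hψc.mul_right
  have i4 : Integrable (fun x => χ x * r x) :=
    (hχ.continuous.mul hr).integrable_of_hasCompactSupport hχc.mul_right
  have hL : ∀ x, (ζ x ^ 2 * (φ x ^ 2 * ⟪Amul Φ (gradient u x) (gradient σ x), gradient σ x⟫)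
        + 2 * w x * φ x * ζ x * ⟪Amul Φ (gradient u x) (gradient σ x), gradient ζ x⟫)
      = fderiv ℝ ψ x (Amul Φ (gradient u x) (gradient w x))
        - fderiv ℝ χ x (Amul Φ (gradient u x) (gradient φ x)) := by
    intro x
    rw [← inner_grad, ← inner_grad, gχ, gψ, gw]
    simp only [ψ]
    rw [hwσ x]
    exact (picone_alg Φ _ _ _ _ _ _ _).symm
  have hR : ∀ x, ζ x ^ 2 * (w x * fderiv ℝ h x e - σ x * w x * r x)
      = ψ x * fderiv ℝ h x e - χ x * r x := by
    intro x; simp only [χ, ψ]; ring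
  simp only [hL, hR]
  rw [integral_sub i1 i2, integral_sub i3 i4, eq1, eq2, hvd]
  simp only [mul_neg, integral_neg, neg_neg]

theorem sum_sym_nonpos {m : ℕ} (b : Fin m → Fin m → ℝ) (s : Fin m → ℝ)
    (hb : ∀ i j, b i j = b j i) (hb0 : ∀ i j, 0 ≤ b i j) :
    ∑ i, ∑ j, b i j * (s i * s j - s i ^ 2) ≤ 0 := by
  have h1 : ∑ i, ∑ j, b i j * (s i * s j - s i ^ 2) = ∑ i, ∑ j, b i j * (s i * s j - s j ^ 2) := by
    rw [Finset.sum_comm]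
    refine Finset.sum_congr rfl fun i _ => Finset.sum_congr rfl fun j _ => ?_
    rw [hb j i]; ring
  have h2 : ∑ i, ∑ j, b i j * (s i * s j - s i ^ 2) + ∑ i, ∑ j, b i j * (s i * s j - s j ^ 2)
      ≤ 0 := by
    simp only [← Finset.sum_add_distrib]
    refine Finset.sum_nonpos fun i _ => Finset.sum_nonpos fun j _ => ?_
    have := mul_nonneg (hb0 i j) (sq_nonneg (s i - s j))
    nlinarith
  linarith

theorem seq_vanish (B : ℝ → ℝ) (hmono : ∀ R S, 1 ≤ R → R ≤ S → B R ≤ B S) (C : ℝ) (hC : 0 ≤ C)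
    (hstep : ∀ R, 1 ≤ R → ∃ J T : ℝ, B R ≤ J ∧ T ≤ J ∧ T ≤ B (2 * R) - B R ∧
      ∀ δ > 0, J ≤ δ * T + δ⁻¹ * C) : ∀ R, 1 ≤ R → B R ≤ 0 := by
  have hbd : ∀ R, 1 ≤ R → B R ≤ 4 * C := by
    intro R hR
    obtain ⟨J, T, h1, h2, h3, h4⟩ := hstep R hR
    have := h4 (1/2) (by norm_num)
    norm_num at this
    linarith
  let b : ℕ → ℝ := fun k => B (2 ^ k)
  have hp : ∀ k : ℕ, (1:ℝ) ≤ 2 ^ k := fun k => one_le_pow₀ (by norm_num)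
  have bm : Monotone b := fun i j hij =>
    hmono _ _ (hp i) (pow_le_pow_right₀ (by norm_num) hij)
  have bb : BddAbove (Set.range b) := ⟨4 * C, by rintro _ ⟨k, rfl⟩; exact hbd _ (hp k)⟩
  have ht := tendsto_atTop_ciSup bm bb
  set l := ⨆ i, b i with hl
  have ht1 := ht.comp (tendsto_add_atTop_nat 1)
  have hlδ : ∀ δ > 0, l ≤ δ⁻¹ * C := by
    intro δ hδ
    have h5 : ∀ k, b k ≤ δ * (b (k+1) - b k) + δ⁻¹ * C := by
      intro k
      obtain ⟨J, T, h1, h2, h3, h4⟩ := hstep (2 ^ k) (hp k)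
      have h6 := h4 δ hδ
      have h7 : δ * T ≤ δ * (b (k+1) - b k) := by
        apply mul_le_mul_of_nonneg_left _ hδ.le
        simp only [b]; rw [pow_succ']; exact h3
      have h8 : b k ≤ J := h1
      linarith
    have h9 : Tendsto (fun k => δ * (b (k+1) - b k) + δ⁻¹ * C) atTop
        (nhds (δ * (l - l) + δ⁻¹ * C)) :=
      ((ht1.sub ht).const_mul δ).add_const _
    have := le_of_tendsto_of_tendsto' ht h9 h5
    simpa using this
  have hl0 : l ≤ 0 := by
    by_contra hpos
    push Not at hpos
    have h1 := hlδ (2 * (C + 1) / l) (by positivity)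
    have : (2 * (C + 1) / l)⁻¹ * C = l * (C / (2 * (C + 1))) := by field_simp
    rw [this] at h1
    have h2 : C / (2 * (C + 1)) < 1 := by rw [div_lt_one (by positivity)]; linarith
    nlinarith
  intro R hR
  obtain ⟨k, hk⟩ := pow_unbounded_of_one_lt R (by norm_num : (1:ℝ) < 2)
  exact (hmono R _ hR hk.le).trans ((le_ciSup bb k).trans hl0)


theorem step_ineq {n : ℕ} (N X Y ζ : EE n → ℝ) (R C : ℝ) (hR : 1 ≤ R)
    (hN : Continuous N) (hN0 : ∀ x, 0 ≤ N x) (hζ : Continuous ζ) (hc : HasCompactSupport ζ)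
    (hζ0 : ∀ x, 0 ≤ ζ x) (hζ1 : ∀ x, ζ x ≤ 1) (hζR : ∀ x, ‖x‖ ≤ R → ζ x = 1)
    (hX : Continuous X) (hX0 : ∀ x, X x ≠ 0 → R < ‖x‖ ∧ ‖x‖ < 2 * R)
    (hY : Integrable Y) (hY0 : ∀ x, 0 ≤ Y x) (hYC : ∫ x, Y x ≤ C)
    (hXY : ∀ δ > 0, ∀ x, - X x ≤ δ * (ζ x ^ 2 * N x) + δ⁻¹ * Y x)
    (hint : ∫ x, (ζ x ^ 2 * N x + X x) ≤ 0) :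
    ∃ J T : ℝ, (∫ x in ball (0 : EE n) R, N x) ≤ J ∧ T ≤ J ∧
      T ≤ (∫ x in ball (0 : EE n) (2 * R), N x) - (∫ x in ball (0 : EE n) R, N x) ∧
      ∀ δ > 0, J ≤ δ * T + δ⁻¹ * C := by
  have hcs2 : HasCompactSupport (fun x => ζ x ^ 2) := by
    refine hc.mono ?_
    intro x hx h; apply hx; simp [h]
  have iJ : Integrable (fun x => ζ x ^ 2 * N x) :=
    ((hζ.pow 2).mul hN).integrable_of_hasCompactSupport hcs2.mul_right
  have iX : Integrable X := by
    refine hX.integrable_of_hasCompactSupport ?_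
    refine HasCompactSupport.intro (isCompact_closedBall (0 : EE n) (2 * R)) fun x hx => ?_
    by_contra h
    exact hx (by simpa using (hX0 x h).2.le)
  have hJ0 : ∀ x, 0 ≤ ζ x ^ 2 * N x := fun x => mul_nonneg (sq_nonneg _) (hN0 x)
  have iN : ∀ r, IntegrableOn N (ball (0 : EE n) r) := fun r =>
    (hN.continuousOn.integrableOn_compact (isCompact_closedBall (0 : EE n) r)).mono_set
      ball_subset_closedBall
  set S : Set (EE n) := ball 0 (2 * R) \ ball 0 R with hS
  have hsub : ball (0 : EE n) R ⊆ ball 0 (2 * R) := ball_subset_ball (by linarith)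
  refine ⟨∫ x, ζ x ^ 2 * N x, ∫ x in S, ζ x ^ 2 * N x, ?_, ?_, ?_, ?_⟩
  · have : ∫ x in ball (0 : EE n) R, N x = ∫ x in ball (0 : EE n) R, ζ x ^ 2 * N x := by
      refine setIntegral_congr_fun measurableSet_ball fun x hx => ?_
      have : ζ x = 1 := hζR x (by simpa using (mem_ball_zero_iff.1 hx).le)
      simp [this]
    rw [this]
    exact setIntegral_le_integral iJ (Filter.Eventually.of_forall hJ0)
  · exact setIntegral_le_integral iJ (Filter.Eventually.of_forall hJ0)
  · rw [← setIntegral_sdiff₀ (measurableSet_ball).nullMeasurableSet (iN _) hsub]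
    refine setIntegral_mono iJ.integrableOn ((iN _).mono_set Set.sdiff_subset) fun x => ?_
    have h1 : ζ x ^ 2 ≤ 1 := pow_le_one₀ (hζ0 x) (hζ1 x)
    have := hN0 x
    show ζ x ^ 2 * N x ≤ N x
    nlinarith
  · intro δ hδ
    rw [integral_add iJ iX] at hint
    have h1 : ∫ x, ζ x ^ 2 * N x ≤ ∫ x, - X x := by rw [integral_neg]; linarith
    have h2 : ∫ x, - X x = ∫ x in S, - X x := by
      refine (setIntegral_eq_integral_of_forall_compl_eq_zero fun x hx => ?_).symm
      by_contra h
      have := hX0 x (fun h' => h (by simp [h']))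
      apply hx
      rw [hS]
      simp [this.1.le, this.2]
    have h3 : ∫ x in S, - X x ≤ ∫ x in S, (δ * (ζ x ^ 2 * N x) + δ⁻¹ * Y x) :=
      setIntegral_mono iX.neg.integrableOn
        ((iJ.const_mul δ).add (hY.const_mul δ⁻¹)).integrableOn (fun x => hXY δ hδ x)
    rw [integral_add (iJ.const_mul δ).integrableOn (hY.const_mul δ⁻¹).integrableOn,
      integral_const_mul, integral_const_mul] at h3
    have h4 : ∫ x in S, Y x ≤ C :=
      (setIntegral_le_integral hY (Filter.Eventually.of_forall hY0)).trans hYC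
    have h5 : δ⁻¹ * ∫ x in S, Y x ≤ δ⁻¹ * C := mul_le_mul_of_nonneg_left h4 (by positivity)
    linarith

theorem vanish {n m : ℕ} (hn : n ≤ 4) (Φ : ℝ → ℝ) (hΦ : ContDiff ℝ 2 Φ)
    (u : Fin m → EE n → ℝ) (hu : ∀ i, ContDiff ℝ 3 (u i))
    (h : Fin m → EE n → ℝ) (hh : ∀ i, ContDiff ℝ 1 (h i)) (hh0 : ∀ i x, 0 ≤ h i x)
    (heq : ∀ i x, -vdiv (fun y => deriv Φ (‖gradient (u i) y‖ ^ 2) • gradient (u i) y) x = h i x)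
    (φ : Fin m → EE n → ℝ) (hφ : ∀ i, ContDiff ℝ 2 (φ i)) (hφ0 : ∀ i x, φ i x ≠ 0)
    (r : Fin m → EE n → ℝ) (hr : ∀ i, Continuous (r i))
    (hFd : ∀ i, Differentiable ℝ (fun y => Amul Φ (gradient (u i) y) (gradient (φ i) y)))
    (hφeq : ∀ i x, -vdiv (fun y => Amul Φ (gradient (u i) y) (gradient (φ i) y)) x = r i x)
    (M : ℝ) (hM : ∀ i x, |u i x| ≤ M)
    (hP0 : ∀ i x, 0 ≤ deriv Φ (‖gradient (u i) x‖ ^ 2))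
    (K : ℝ) (hK : ∀ i x, deriv Φ (‖gradient (u i) x‖ ^ 2) ≤ K)
    (hpsd : ∀ η v : EE n, 0 ≤ ⟪Amul Φ η v, v⟫)
    (Λ : ℝ) (hΛ0 : 0 ≤ Λ)
    (hΛ : ∀ i x, ∀ v : EE n, ⟪Amul Φ (gradient (u i) x) v, v⟫
      ≤ Λ * deriv Φ (‖gradient (u i) x‖ ^ 2) * ‖v‖ ^ 2)
    (e : EE n)
    (w σ : Fin m → EE n → ℝ) (hw : ∀ i, w i = fun x => fderiv ℝ (u i) x e)
    (hσ : ∀ i, σ i = fun x => w i x / φ i x)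
    (hneg : ∀ x, ∑ i, (w i x * fderiv ℝ (h i) x e - σ i x * w i x * r i x) ≤ 0) :
    ∀ i x, ⟪Amul Φ (gradient (u i) x) (gradient (σ i) x), gradient (σ i) x⟫ = 0 := by
  have hw2 : ∀ i, ContDiff ℝ 2 (w i) := fun i => by
    rw [hw i]; exact contDiff_D (k := 2) (u i) (hu i) e
  have hσ2 : ∀ i, ContDiff ℝ 2 (σ i) := fun i => by rw [hσ i]; exact (hw2 i).div (hφ i) (hφ0 i)
  have cgu : ∀ i, Continuous (gradient (u i)) := fun i =>
    (contDiff_gradient (k := 2) _ (hu i)).continuous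
  have cgσ : ∀ i, Continuous (gradient (σ i)) := fun i =>
    (contDiff_gradient (k := 1) _ (hσ2 i)).continuous
  have cN : ∀ i, Continuous (fun x => φ i x ^ 2 *
      ⟪Amul Φ (gradient (u i) x) (gradient (σ i) x), gradient (σ i) x⟫) := fun i =>
    ((hφ i).continuous.pow 2).mul ((Amul_continuous Φ hΦ _ _ (cgu i) (cgσ i)).inner (cgσ i))
  let N : EE n → ℝ := fun x => ∑ i, φ i x ^ 2 *
      ⟪Amul Φ (gradient (u i) x) (gradient (σ i) x), gradient (σ i) x⟫
  have hN : Continuous N := continuous_finsetSum _ fun i _ => cN i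
  have hNi0 : ∀ i x, 0 ≤ φ i x ^ 2 *
      ⟪Amul Φ (gradient (u i) x) (gradient (σ i) x), gradient (σ i) x⟫ := fun i x =>
    mul_nonneg (sq_nonneg _) (hpsd _ _)
  have hN0 : ∀ x, 0 ≤ N x := fun x => Finset.sum_nonneg fun i _ => hNi0 i x
  have iN : ∀ r, IntegrableOn N (ball (0 : EE n) r) := fun r =>
    (hN.continuousOn.integrableOn_compact (isCompact_closedBall (0 : EE n) r)).mono_set
      ball_subset_closedBall
  obtain ⟨L, hL0, hL⟩ := exists_cutoff n hn
  have hen : ∀ i, ∃ C : ℝ, 0 ≤ C ∧ ∀ R : ℝ, 1 ≤ R →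
      ∫ x in ball (0 : EE n) R, deriv Φ (‖gradient (u i) x‖ ^ 2) * ‖gradient (u i) x‖ ^ 2
        ≤ C * R ^ 2 := fun i =>
    energy hn Φ hΦ (u i) ((hu i).of_le (by norm_num)) (h i) (hh0 i) (heq i) M (hM i) (hP0 i) K (hK i)
  choose E hE0 hE using hen
  have hB : ∀ R, 1 ≤ R → (∫ x in ball (0 : EE n) R, N x) ≤ 0 := by
    refine seq_vanish (fun R => ∫ x in ball (0 : EE n) R, N x) ?_
      (∑ i, 4 * Λ * L ^ 2 * ‖e‖ ^ 2 * E i) ?_ ?_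
    · intro R S _ hRS
      exact setIntegral_mono_set (iN S) (Filter.Eventually.of_forall hN0)
        (ball_subset_ball hRS).eventuallyLE
    · exact Finset.sum_nonneg fun i _ => by have := hE0 i; positivity
    · intro R hR
      have hRpos : 0 < R := by linarith
      obtain ⟨ζ, hζ, hcs, hnn, hle, h1, h0, hgL, hgz, -⟩ := hL R hR
      have cgζ : Continuous (gradient ζ) := (contDiff_gradient (k := 1) _ hζ).continuous
      have cX : ∀ i, Continuous (fun x => 2 * w i x * φ i x * ζ x *
          ⟪Amul Φ (gradient (u i) x) (gradient (σ i) x), gradient ζ x⟫) := fun i =>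
        (((continuous_const.mul (hw2 i).continuous).mul (hφ i).continuous).mul hζ.continuous).mul
          ((Amul_continuous Φ hΦ _ _ (cgu i) (cgσ i)).inner cgζ)
      have cY : ∀ i, Continuous (fun x => w i x ^ 2 *
          ⟪Amul Φ (gradient (u i) x) (gradient ζ x), gradient ζ x⟫) := fun i =>
        ((hw2 i).continuous.pow 2).mul ((Amul_continuous Φ hΦ _ _ (cgu i) cgζ).inner cgζ)
      have hY0 : ∀ i x, 0 ≤ w i x ^ 2 *
          ⟪Amul Φ (gradient (u i) x) (gradient ζ x), gradient ζ x⟫ := fun i x =>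
        mul_nonneg (sq_nonneg _) (hpsd _ _)
      have hYz : ∀ i x, x ∉ ball (0 : EE n) (2 * R) → w i x ^ 2 *
          ⟪Amul Φ (gradient (u i) x) (gradient ζ x), gradient ζ x⟫ = 0 := by
        intro i x hx
        have : gradient ζ x = 0 := by
          by_contra hne
          exact hx (by simpa using (hgz x hne).2)
        simp [this]
      have iY : ∀ i, Integrable (fun x => w i x ^ 2 *
          ⟪Amul Φ (gradient (u i) x) (gradient ζ x), gradient ζ x⟫) := fun i => by
        refine (cY i).integrable_of_hasCompactSupport ?_
        refine HasCompactSupport.intro (isCompact_closedBall (0 : EE n) (2 * R)) fun x hx => ?_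
        exact hYz i x fun h' => hx (ball_subset_closedBall h')
      have hYb : ∀ i x, w i x ^ 2 * ⟪Amul Φ (gradient (u i) x) (gradient ζ x), gradient ζ x⟫
          ≤ (Λ * L ^ 2 * ‖e‖ ^ 2 / R ^ 2) *
            (deriv Φ (‖gradient (u i) x‖ ^ 2) * ‖gradient (u i) x‖ ^ 2) := by
        intro i x
        have a1 : w i x ^ 2 ≤ ‖gradient (u i) x‖ ^ 2 * ‖e‖ ^ 2 := by
          rw [← mul_pow, ← sq_abs]
          refine pow_le_pow_left₀ (abs_nonneg _) ?_ 2
          rw [hw i]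
          simp only
          rw [← inner_grad]
          exact abs_real_inner_le_norm _ _
        have a2 := hΛ i x (gradient ζ x)
        have a3 : ‖gradient ζ x‖ ^ 2 ≤ (L / R) ^ 2 := pow_le_pow_left₀ (norm_nonneg _) (hgL x) 2
        have a4 := hP0 i x
        calc _ ≤ (‖gradient (u i) x‖ ^ 2 * ‖e‖ ^ 2) *
              (Λ * deriv Φ (‖gradient (u i) x‖ ^ 2) * (L / R) ^ 2) := by
              refine mul_le_mul a1 (a2.trans ?_) (hpsd _ _) (by positivity)
              gcongr
          _ = _ := by field_simp
      have cP : ∀ i, Continuous (fun x => deriv Φ (‖gradient (u i) x‖ ^ 2) * ‖gradient (u i) x‖ ^ 2) :=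
        fun i => (((hΦ.continuous_deriv (by norm_num)).comp ((cgu i).norm.pow 2))).mul
          ((cgu i).norm.pow 2)
      have hYC : ∀ i, ∫ x, w i x ^ 2 * ⟪Amul Φ (gradient (u i) x) (gradient ζ x), gradient ζ x⟫
          ≤ 4 * Λ * L ^ 2 * ‖e‖ ^ 2 * E i := by
        intro i
        rw [← setIntegral_eq_integral_of_forall_compl_eq_zero (hYz i)]
        have iP : IntegrableOn (fun x => deriv Φ (‖gradient (u i) x‖ ^ 2) * ‖gradient (u i) x‖ ^ 2)
            (ball (0 : EE n) (2 * R)) :=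
          ((cP i).continuousOn.integrableOn_compact (isCompact_closedBall (0 : EE n) _)).mono_set
            ball_subset_closedBall
        have b1 := setIntegral_mono (iY i).integrableOn
          (iP.const_mul (Λ * L ^ 2 * ‖e‖ ^ 2 / R ^ 2)) (hYb i)
        rw [integral_const_mul] at b1
        refine b1.trans ?_
        have b2 := hE i (2 * R) (by linarith)
        calc _ ≤ (Λ * L ^ 2 * ‖e‖ ^ 2 / R ^ 2) * (E i * (2 * R) ^ 2) := by gcongr
          _ = _ := by field_simp; ring
      have hpic := fun i => picone Φ hΦ (u i) (hu i) (h i) (hh i) (heq i) (φ i) (hφ i) (hφ0 i)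
        (r i) (hr i) (hFd i) (hφeq i) ζ hζ hcs e (w i) (σ i) (hw i) (hσ i)
      have hcs2 : HasCompactSupport (fun x => ζ x ^ 2) := by
        refine hcs.mono ?_
        intro x hx h; apply hx; simp [h]
      refine step_ineq N (fun x => ∑ i, 2 * w i x * φ i x * ζ x *
          ⟪Amul Φ (gradient (u i) x) (gradient (σ i) x), gradient ζ x⟫)
        (fun x => ∑ i, w i x ^ 2 * ⟪Amul Φ (gradient (u i) x) (gradient ζ x), gradient ζ x⟫)
        ζ R _ hR hN hN0 hζ.continuous hcs hnn hle h1
        (continuous_finsetSum _ fun i _ => cX i) ?_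
        (integrable_finsetSum _ fun i _ => iY i)
        (fun x => Finset.sum_nonneg fun i _ => hY0 i x) ?_ ?_ ?_
      · intro x hx
        apply hgz
        intro hz
        apply hx
        simp [hz]
      · rw [integral_finsetSum _ fun i _ => iY i]
        exact Finset.sum_le_sum fun i _ => hYC i
      · intro δ hδ x
        simp only [N, Finset.mul_sum, ← Finset.sum_neg_distrib, ← Finset.sum_add_distrib]
        exact Finset.sum_le_sum fun i _ => Amul_young Φ _ _ _ (hpsd _) _ _ _ δ hδ
      · have e1 : ∀ x, ζ x ^ 2 * N x + ∑ i, 2 * w i x * φ i x * ζ x *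
            ⟪Amul Φ (gradient (u i) x) (gradient (σ i) x), gradient ζ x⟫
            = ∑ i, (ζ x ^ 2 * (φ i x ^ 2 *
              ⟪Amul Φ (gradient (u i) x) (gradient (σ i) x), gradient (σ i) x⟫)
              + 2 * w i x * φ i x * ζ x *
              ⟪Amul Φ (gradient (u i) x) (gradient (σ i) x), gradient ζ x⟫) := by
          intro x; simp only [N, Finset.mul_sum, ← Finset.sum_add_distrib]
        simp only [e1]
        rw [integral_finsetSum]
        · simp only [hpic]
          rw [← integral_finsetSum]
          · refine integral_nonpos fun x => ?_
            simp only [← Finset.mul_sum]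
            exact mul_nonpos_of_nonneg_of_nonpos (sq_nonneg _) (hneg x)
          · intro i _
            refine Continuous.integrable_of_hasCompactSupport ?_ hcs2.mul_right
            refine (hζ.continuous.pow 2).mul ?_
            refine ((hw2 i).continuous.mul (((hh i).continuous_fderiv one_ne_zero).clm_apply
              continuous_const)).sub (((hσ2 i).continuous.mul (hw2 i).continuous).mul (hr i))
        · intro i _
          refine Continuous.integrable_of_hasCompactSupport
            (((hζ.continuous.pow 2).mul (cN i)).add (cX i)) ?_
          refine hcs.mono ?_
          intro x hx h; apply hx; simp [h]
  have hNz : ∀ x, N x = 0 := by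
    intro x
    let R := ‖x‖ + 1
    have hR : 1 ≤ R := by simp [R]
    have h2 : ∫ x in ball (0 : EE n) R, N x = 0 :=
      le_antisymm (hB R hR) (integral_nonneg hN0)
    rw [setIntegral_eq_zero_iff_of_nonneg_ae (Filter.Eventually.of_forall hN0) (iN R)] at h2
    have h3 := Measure.eqOn_open_of_ae_eq h2 isOpen_ball hN.continuousOn continuousOn_const
    exact h3 (by simp [R])
  intro i x
  have h4 := (Finset.sum_eq_zero_iff_of_nonneg (fun i _ => hNi0 i x)).1 (hNz x) i (Finset.mem_univ i)
  rcases mul_eq_zero.1 h4 with h5 | h5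
  · exact absurd (pow_eq_zero_iff two_ne_zero |>.1 h5) (hφ0 i x)
  · exact h5


theorem deriv_nonneg_zero (Φ : ℝ → ℝ) (hΦ : ContDiff ℝ 2 Φ)
    (hΦ'pos : ∀ s : ℝ, 0 < s → 0 < deriv Φ s) (s : ℝ) (hs : 0 ≤ s) : 0 ≤ deriv Φ s := by
  have hc : Continuous (deriv Φ) := hΦ.continuous_deriv (by norm_num)
  have h1 : Set.Ici (0:ℝ) ⊆ {s | 0 ≤ deriv Φ s} := by
    rw [← closure_Ioi]
    exact closure_minimal (fun s hs => (hΦ'pos s hs).le) (isClosed_le continuous_const hc)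
  exact h1 hs

theorem Amul_pos {n : ℕ} (Φ : ℝ → ℝ)
    (hΦ'pos : ∀ s : ℝ, 0 < s → 0 < deriv Φ s)
    (hΦell : ∀ s : ℝ, 0 < s → 0 < deriv Φ s + 2 * s * deriv (deriv Φ) s)
    (η v : EE n) (hη : η ≠ 0) (hv : v ≠ 0) : 0 < ⟪Amul Φ η v, v⟫ := by
  rw [inner_Amul, real_inner_self_eq_norm_sq]
  have hs : 0 < ‖η‖ ^ 2 := by positivity
  have h1 := hΦ'pos _ hs
  have h2 := hΦell _ hs
  have hv2 : 0 < ‖v‖ ^ 2 := by positivity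
  have h3 : ⟪η, v⟫ * ⟪η, v⟫ ≤ ‖η‖ ^ 2 * ‖v‖ ^ 2 := by
    have := abs_real_inner_le_norm η v
    rw [← mul_pow, ← sq, ← sq_abs]
    exact pow_le_pow_left₀ (abs_nonneg _) this 2
  set D := deriv (deriv Φ) (‖η‖ ^ 2)
  by_cases hD : 0 ≤ D
  · have : 0 ≤ 2 * D * ⟪η, v⟫ * ⟪η, v⟫ := by
      have := mul_self_nonneg ⟪η, v⟫
      rw [mul_assoc]; positivity
    have := mul_pos h1 hv2
    linarith
  · push Not at hD
    have h4 : D * (‖η‖ ^ 2 * ‖v‖ ^ 2) ≤ D * (⟪η, v⟫ * ⟪η, v⟫) :=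
      mul_le_mul_of_nonpos_left h3 hD.le
    have h5 := mul_pos h2 hv2
    nlinarith

theorem Amul_psd {n : ℕ} (Φ : ℝ → ℝ) (hΦ : ContDiff ℝ 2 Φ)
    (hΦ'pos : ∀ s : ℝ, 0 < s → 0 < deriv Φ s)
    (hΦell : ∀ s : ℝ, 0 < s → 0 < deriv Φ s + 2 * s * deriv (deriv Φ) s)
    (η v : EE n) : 0 ≤ ⟪Amul Φ η v, v⟫ := by
  by_cases hη : η = 0
  · rw [inner_Amul, real_inner_self_eq_norm_sq]
    have := deriv_nonneg_zero Φ hΦ hΦ'pos (‖η‖ ^ 2) (by positivity)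
    subst hη
    simp only [inner_zero_left, mul_zero, zero_add]
    positivity
  · by_cases hv : v = 0
    · simp [hv]
    · exact (Amul_pos Φ hΦ'pos hΦell η v hη hv).le

theorem Amul_upper {n : ℕ} (Φ : ℝ → ℝ) (hAB : ConditionA n Φ ∨ ConditionB n Φ) (G : ℝ) :
    ∃ Λ : ℝ, 0 ≤ Λ ∧ ∀ η : EE n, ‖η‖ ≤ G → ∀ v : EE n,
      ⟪Amul Φ η v, v⟫ ≤ Λ * deriv Φ (‖η‖ ^ 2) * ‖v‖ ^ 2 := by
  rcases hAB with ⟨ε, C₁, C₂, hε, h1, h12, hA⟩ | ⟨p, ε, C₁, C₂, hp, hε, h1, h12, hB⟩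
  · have h2 : 0 < C₂ := by linarith
    refine ⟨C₂ / C₁ * (1 + G ^ 2), by positivity, fun η hη v => ?_⟩
    obtain ⟨⟨a1, a2⟩, a3⟩ := hA η
    obtain ⟨-, a4⟩ := a3 v ⟪η, v⟫ (by ring)
    set X := (ε + ‖η‖)⁻¹ with hX
    have hX0 : 0 ≤ X := by positivity
    have b1 : X ≤ deriv Φ (‖η‖ ^ 2) / C₁ := by rw [le_div_iff₀ h1]; linarith
    have b2 : ⟪η, v⟫ ^ 2 ≤ G ^ 2 * ‖v‖ ^ 2 := by
      rw [← mul_pow, ← sq_abs]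
      refine pow_le_pow_left₀ (abs_nonneg _) ((abs_real_inner_le_norm η v).trans ?_) 2
      gcongr
    have hX1 : 0 ≤ deriv Φ (‖η‖ ^ 2) / C₁ := hX0.trans b1
    calc _ ≤ _ := a4
      _ ≤ C₂ * (deriv Φ (‖η‖ ^ 2) / C₁) * (‖v‖ ^ 2 + G ^ 2 * ‖v‖ ^ 2) := by gcongr
      _ = _ := by field_simp
  · have h2 : 0 < C₂ := by linarith
    refine ⟨C₂ / C₁, by positivity, fun η hη v => ?_⟩
    obtain ⟨⟨a1, a2⟩, a3, a4⟩ := hB η v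
    set X := (ε + ‖η‖) ^ (p - 2) with hX
    have b1 : X ≤ deriv Φ (‖η‖ ^ 2) / C₁ := by rw [le_div_iff₀ h1]; linarith
    calc _ ≤ _ := a4
      _ ≤ C₂ * (deriv Φ (‖η‖ ^ 2) / C₁) * ‖v‖ ^ 2 := by gcongr
      _ = _ := by field_simp

theorem fderiv_zero_of_grad {n : ℕ} (f : EE n → ℝ) (x : EE n) (hx : gradient f x = 0) :
    fderiv ℝ f x = 0 := by
  ext v; rw [← inner_grad, hx]; simp

theorem sigma_const {n : ℕ} (σ : EE n → ℝ) (hσ : Differentiable ℝ σ) (g : EE n → EE n)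
    (h1 : ∀ x, g x = 0 → σ x = 0) (h2 : ∀ x, g x ≠ 0 → gradient σ x = 0) :
    ∃ c, ∀ x, σ x = c := by
  have hsq : ∀ x y, σ x ^ 2 = σ y ^ 2 := by
    have hd : Differentiable ℝ (fun x => σ x ^ 2) := hσ.pow 2
    refine is_const_of_fderiv_eq_zero hd fun x => ?_
    have h3 : HasFDerivAt (fun x => σ x ^ 2) _ x := (hσ x).hasFDerivAt.pow 2
    rw [h3.fderiv]
    by_cases hg : g x = 0
    · simp [h1 x hg]
    · simp [fderiv_zero_of_grad σ x (h2 x hg)]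
  by_cases h0 : σ 0 = 0
  · refine ⟨0, fun x => ?_⟩
    have := hsq x 0
    rw [h0] at this
    simpa using this
  · refine ⟨σ 0, fun x => ?_⟩
    refine is_const_of_fderiv_eq_zero hσ (fun y => ?_) x 0
    apply fderiv_zero_of_grad
    apply h2
    intro hg
    have := hsq 0 y
    rw [h1 y hg] at this
    simp at this
    exact h0 this

theorem endgame_pos {n : ℕ} (Φ : ℝ → ℝ) (hΦ : ContDiff ℝ 2 Φ)
    (hΦ'pos : ∀ s : ℝ, 0 < s → 0 < deriv Φ s) (u : EE n → ℝ) (hu : ContDiff ℝ 3 u)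
    (h : EE n → ℝ) (hh0 : ∀ x, 0 ≤ h x)
    (heq : ∀ x, -vdiv (fun y => deriv Φ (‖gradient u y‖ ^ 2) • gradient u y) x = h x)
    (M : ℝ) (hM : ∀ x, |u x| ≤ M) (K : ℝ) (hK : ∀ x, deriv Φ (‖gradient u x‖ ^ 2) ≤ K)
    (φ : EE n → ℝ) (hφ : ContDiff ℝ 2 φ) (hφ0 : ∀ x, 0 < φ x) (c : EE n)
    (hc : ∀ x, gradient u x = φ x • c) : c = 0 := by
  by_contra hc0
  have hcn : 0 < ‖c‖ := norm_pos_iff.2 hc0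
  have hg : ContDiff ℝ 2 (gradient u) := contDiff_gradient (k := 2) u hu
  have hd : ContDiff ℝ 1 (deriv Φ) := ((contDiff_succ_iff_deriv (n := 1)).1 hΦ).2.2
  have hPp : ∀ x, 0 < deriv Φ (‖gradient u x‖ ^ 2) := by
    intro x
    apply hΦ'pos
    have : gradient u x ≠ 0 := by
      rw [hc x]; exact smul_ne_zero (hφ0 x).ne' hc0
    positivity
  have hKp : 0 < K := (hPp 0).trans_le (hK 0)
  let f : EE n → ℝ := fun x => deriv Φ (‖gradient u x‖ ^ 2) * φ x
  have hf : ContDiff ℝ 1 f :=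
    (hd.comp ((hg.of_le (by norm_num)).norm_sq ℝ)).mul (hφ.of_le (by norm_num))
  have hfd := hf.differentiable one_ne_zero
  have hF : (fun y => deriv Φ (‖gradient u y‖ ^ 2) • gradient u y) = fun y => f y • c := by
    ext1 y
    rw [show f y • c = deriv Φ (‖gradient u y‖ ^ 2) • (φ y • c) by simp [f, smul_smul], ← hc y]
  have hfc : ∀ x, fderiv ℝ f x c ≤ 0 := by
    intro x
    have h1 := heq x
    rw [hF, vdiv_smul (fun _ => c) f x (differentiableAt_const c) (hfd x)] at h1
    have h2 : vdiv (fun _ : EE n => c) x = 0 := by simp [vdiv]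
    rw [h2] at h1
    have := hh0 x
    linarith
  have hline : ∀ t : ℝ, HasDerivAt (fun t : ℝ => t • c) c t := fun t => by
    simpa using (hasDerivAt_id t).smul_const c
  have hk : ∀ t : ℝ, HasDerivAt (fun t : ℝ => f (t • c)) (fderiv ℝ f (t • c) c) t := by
    intro t
    have h1 : HasFDerivAt f (fderiv ℝ f (t • c)) (t • c) := (hfd _).hasFDerivAt
    exact HasFDerivAt.comp_hasDerivAt (f := fun t : ℝ => t • c) t h1 (hline t)
  have hanti : Antitone (fun t : ℝ => f (t • c)) :=
    antitone_of_hasDerivAt_nonpos hk fun t => hfc _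
  have hud := hu.differentiable (by norm_num)
  have hgd : ∀ t : ℝ, HasDerivAt (fun t : ℝ => u (t • c)) (fderiv ℝ u (t • c) c) t := fun t =>
    ((hud (t • c)).hasFDerivAt).comp_hasDerivAt t (hline t)
  set k0 := f 0 with hk0
  have hk0p : 0 < k0 := mul_pos (hPp 0) (hφ0 0)
  set a := k0 / K * ‖c‖ ^ 2 with ha
  have hap : 0 < a := by positivity
  have hlow : ∀ t : ℝ, t ≤ 0 → a ≤ fderiv ℝ u (t • c) c := by
    intro t ht
    rw [← inner_grad, hc, real_inner_smul_left, real_inner_self_eq_norm_sq, ha]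
    gcongr
    rw [div_le_iff₀ hKp]
    have h1 := hanti ht
    simp only [zero_smul] at h1
    have h2 : f (t • c) ≤ K * φ (t • c) := by
      have := hφ0 (t • c)
      simp only [f]
      gcongr
      exact hK _
    linarith
  let T := (2 * M + 1) / a
  have hM0 : 0 ≤ M := (abs_nonneg _).trans (hM 0)
  have hT : 0 < T := by positivity
  have hmv := (convex_Iic (0:ℝ)).mul_sub_le_image_sub_of_le_deriv
    (f := fun t : ℝ => u (t • c)) (C := a)
    (fun t _ => (hgd t).continuousAt.continuousWithinAt)
    (fun t _ => (hgd t).differentiableAt.differentiableWithinAt)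
    (fun t ht => by
      rw [(hgd t).deriv]
      exact hlow t (show t ∈ Set.Iic (0:ℝ) from interior_subset ht))
    (-T) (by simp [hT.le]) 0 (by simp) (by linarith)
  have haT : a * (0 - -T) = 2 * M + 1 := by simp only [T]; field_simp; ring
  rw [haT] at hmv
  have h1 := abs_le.1 (hM ((0:ℝ) • c))
  have h2 := abs_le.1 (hM ((-T) • c))
  linarith [h1.2, h2.1]

theorem endgame {n : ℕ} (Φ : ℝ → ℝ) (hΦ : ContDiff ℝ 2 Φ)
    (hΦ'pos : ∀ s : ℝ, 0 < s → 0 < deriv Φ s) (u : EE n → ℝ) (hu : ContDiff ℝ 3 u)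
    (h : EE n → ℝ) (hh0 : ∀ x, 0 ≤ h x)
    (heq : ∀ x, -vdiv (fun y => deriv Φ (‖gradient u y‖ ^ 2) • gradient u y) x = h x)
    (M : ℝ) (hM : ∀ x, |u x| ≤ M) (K : ℝ) (hK : ∀ x, deriv Φ (‖gradient u x‖ ^ 2) ≤ K)
    (φ : EE n → ℝ) (hφ : ContDiff ℝ 2 φ) (hφ0 : ∀ x, φ x ≠ 0) (c : EE n)
    (hc : ∀ x, gradient u x = φ x • c) : c = 0 := by
  by_cases hp : ∀ x, 0 < φ x
  · exact endgame_pos Φ hΦ hΦ'pos u hu h hh0 heq M hM K hK φ hφ hp c hc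
  · push Not at hp
    obtain ⟨a, ha⟩ := hp
    have hn : ∀ x, φ x < 0 := by
      intro x
      by_contra hx
      push Not at hx
      obtain ⟨y, hy⟩ := mem_range_of_exists_le_of_exists_ge hφ.continuous ⟨a, ha⟩ ⟨x, hx⟩
      exact hφ0 y hy
    have := endgame_pos Φ hΦ hΦ'pos u hu h hh0 heq M hM K hK (fun x => - φ x) hφ.neg
      (fun x => by have := hn x; linarith) (-c) (fun x => by rw [hc x]; simp)
    simpa using this


/-- **Liouville theorem in dimensions `n ≤ 4`**: a bounded stable solution of the
symmetric quasilinear system `-div(Φ'(|∇uᵢ|²)∇uᵢ) = Hᵢ(u)` with nonnegative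
nonlinearities `Hᵢ ≥ 0`, `Φ` satisfying Condition (A) or (B), and
`|∇uᵢ| ∈ L^∞ ∩ W^{1,2}_loc`, must be constant when `1 ≤ n ≤ 4`. -/
theorem liouville_dimension_le_four
    (n m : ℕ) (hn1 : 1 ≤ n) (hn4 : n ≤ 4) (hm : 1 ≤ m)
    (Φ : ℝ → ℝ) (hΦ : ContDiff ℝ 2 Φ) (hΦ0 : Φ 0 = 0)
    (hΦpos : ∀ s : ℝ, 0 < s → 0 < Φ s)
    (hΦ'pos : ∀ s : ℝ, 0 < s → 0 < deriv Φ s)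
    (hΦell : ∀ s : ℝ, 0 < s → 0 < deriv Φ s + 2 * s * deriv (deriv Φ) s)
    (hAB : ConditionA n Φ ∨ ConditionB n Φ)
    (H : Fin m → (Fin m → ℝ) → ℝ) (hH : ∀ i, ContDiff ℝ 1 (H i))
    (hHnonneg : ∀ (i : Fin m) (y : Fin m → ℝ), 0 ≤ H i y)
    -- the system is symmetric
    (hsym : ∀ (i j : Fin m) (y : Fin m → ℝ),
      fderiv ℝ (H i) y (Pi.single j 1) = fderiv ℝ (H j) y (Pi.single i 1))
    (u : Fin m → EuclideanSpace ℝ (Fin n) → ℝ)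
    (hu : ∀ i, ContDiff ℝ 3 (u i))
    (hsol : ∀ i x, -vdiv (fun y => deriv Φ (‖gradient (u i) y‖ ^ 2) • gradient (u i) y) x
        = H i (fun j => u j x))
    (hcoupling : ∀ (i j : Fin m) (x : EuclideanSpace ℝ (Fin n)),
      0 < fderiv ℝ (H i) (fun k => u k x) (Pi.single j 1)
        * fderiv ℝ (H j) (fun k => u k x) (Pi.single i 1))
    -- `u` is bounded
    (hubdd : ∃ C : ℝ, ∀ i x, |u i x| ≤ C)
    -- |∇uᵢ| ∈ L^∞
    (hgradbdd : ∃ C : ℝ, ∀ i x, ‖gradient (u i) x‖ ≤ C)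
    -- |∇uᵢ| ∈ W^{1,2}_loc
    (hW12loc : ∀ i, ∀ K : Set (EuclideanSpace ℝ (Fin n)), IsCompact K →
      IntegrableOn (fun x =>
        ‖gradient (fun y => ‖gradient (u i) y‖) x‖ ^ 2) K volume)
    -- stability: there is a sign-coherent solution of the linearized system
    (hstable : ∃ φ : Fin m → EuclideanSpace ℝ (Fin n) → ℝ,
      (∀ i, ContDiff ℝ 2 (φ i)) ∧ (∀ i x, φ i x ≠ 0) ∧
      (∀ (i j : Fin m) (x : EuclideanSpace ℝ (Fin n)),
        0 < fderiv ℝ (H i) (fun k => u k x) (Pi.single j 1) * φ i x * φ j x) ∧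
      (∀ i x, -vdiv (fun y => Amul Φ (gradient (u i) y) (gradient (φ i) y)) x
        = ∑ j, fderiv ℝ (H i) (fun k => u k x) (Pi.single j 1) * φ j x)) :
    ∀ i, ∀ x y, u i x = u i y := by
  obtain ⟨M, hM⟩ := hubdd
  obtain ⟨G, hG⟩ := hgradbdd
  obtain ⟨φ, hφ, hφ0, hpos, hlin⟩ := hstable
  have hud : ∀ i x, DifferentiableAt ℝ (u i) x := fun i x =>
    (hu i).differentiable (by norm_num) x
  have hU : ContDiff ℝ 1 (fun x : EE n => (fun j => u j x : Fin m → ℝ)) :=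
    contDiff_pi.2 fun j => (hu j).of_le (by norm_num)
  have hh : ∀ i, ContDiff ℝ 1 (fun x : EE n => H i (fun j => u j x)) := fun i => (hH i).comp hU
  have hfh : ∀ i (x e : EE n), fderiv ℝ (fun x : EE n => H i (fun j => u j x)) x e
      = ∑ j, fderiv ℝ (H i) (fun k => u k x) (Pi.single j 1) * fderiv ℝ (u j) x e := by
    intro i x e
    have h1 : HasFDerivAt (H i) (fderiv ℝ (H i) (fun k => u k x)) (fun k => u k x) :=
      ((hH i).differentiable one_ne_zero _).hasFDerivAt
    have h2 : HasFDerivAt (fun x : EE n => (fun j => u j x : Fin m → ℝ))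
        (ContinuousLinearMap.pi fun j => fderiv ℝ (u j) x) x :=
      hasFDerivAt_pi.2 fun j => (hud j x).hasFDerivAt
    have h3 := HasFDerivAt.comp (f := fun x : EE n => (fun j => u j x : Fin m → ℝ)) x h1 h2
    have h4 : fderiv ℝ (fun x : EE n => H i (fun j => u j x)) x = _ := h3.fderiv
    rw [h4, ContinuousLinearMap.comp_apply]
    set v : Fin m → ℝ := (ContinuousLinearMap.pi fun j => fderiv ℝ (u j) x) e with hv
    have h5 : v = ∑ j, v j • (Pi.single j 1 : Fin m → ℝ) := pi_eq_sum_univ' v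
    rw [h5, map_sum]
    refine Finset.sum_congr rfl fun j _ => ?_
    rw [map_smul, smul_eq_mul, mul_comm]
    rfl
  have hr : ∀ i, Continuous
      (fun x => ∑ j, fderiv ℝ (H i) (fun k => u k x) (Pi.single j 1) * φ j x) := by
    intro i
    refine continuous_finset_sum _ fun j _ => ?_
    have h1 : Continuous (fun y => fderiv ℝ (H i) y) := (hH i).continuous_fderiv one_ne_zero
    exact ((h1.comp hU.continuous).clm_apply continuous_const).mul (hφ j).continuous
  have hFd : ∀ i, Differentiable ℝ
      (fun y => Amul Φ (gradient (u i) y) (gradient (φ i) y)) := by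
    intro i x
    by_contra hnd
    have h1 := hlin i x
    have h2 : vdiv (fun y => Amul Φ (gradient (u i) y) (gradient (φ i) y)) x = 0 := by
      unfold vdiv
      rw [fderiv_zero_of_not_differentiableAt hnd]
      simp
    rw [h2, neg_zero] at h1
    have h3 : 0 < ∑ j, fderiv ℝ (H i) (fun k => u k x) (Pi.single j 1) * φ i x * φ j x :=
      Finset.sum_pos (fun j _ => hpos i j x) ⟨i, Finset.mem_univ i⟩
    have h4 : ∑ j, fderiv ℝ (H i) (fun k => u k x) (Pi.single j 1) * φ i x * φ j x
        = φ i x * ∑ j, fderiv ℝ (H i) (fun k => u k x) (Pi.single j 1) * φ j x := by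
      rw [Finset.mul_sum]
      exact Finset.sum_congr rfl fun j _ => by ring
    rw [h4, ← h1, mul_zero] at h3
    exact lt_irrefl _ h3
  have hP0 : ∀ i x, 0 ≤ deriv Φ (‖gradient (u i) x‖ ^ 2) := fun i x =>
    deriv_nonneg_zero Φ hΦ hΦ'pos _ (by positivity)
  obtain ⟨K, hK⟩ : ∃ K : ℝ, ∀ i x, deriv Φ (‖gradient (u i) x‖ ^ 2) ≤ K := by
    have hc : Continuous (deriv Φ) := hΦ.continuous_deriv (by norm_num)
    obtain ⟨K, hK⟩ := (isCompact_Icc (a := (0:ℝ)) (b := G ^ 2)).bddAbove_image hc.continuousOn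
    refine ⟨K, fun i x => hK ⟨_, ⟨by positivity, ?_⟩, rfl⟩⟩
    exact pow_le_pow_left₀ (norm_nonneg _) (hG i x) 2
  have hpsd : ∀ η v : EE n, 0 ≤ ⟪Amul Φ η v, v⟫ := Amul_psd Φ hΦ hΦ'pos hΦell
  obtain ⟨Λ, hΛ0, hΛ⟩ := Amul_upper (n := n) Φ hAB G
  have hneg : ∀ e x : EE n, ∑ i, (fderiv ℝ (u i) x e *
      fderiv ℝ (fun x : EE n => H i (fun j => u j x)) x e
      - fderiv ℝ (u i) x e / φ i x * fderiv ℝ (u i) x e *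
        ∑ j, fderiv ℝ (H i) (fun k => u k x) (Pi.single j 1) * φ j x) ≤ 0 := by
    intro e x
    have h1 := sum_sym_nonpos
      (fun i j => fderiv ℝ (H i) (fun k => u k x) (Pi.single j 1) * φ i x * φ j x)
      (fun i => fderiv ℝ (u i) x e / φ i x)
      (fun i j => by rw [hsym i j]; ring) (fun i j => (hpos i j x).le)
    refine le_of_eq_of_le (Finset.sum_congr rfl fun i _ => ?_) h1
    rw [hfh, Finset.mul_sum, Finset.mul_sum, ← Finset.sum_sub_distrib]
    refine Finset.sum_congr rfl fun j _ => ?_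
    have a1 := hφ0 i x
    have a2 := hφ0 j x
    field_simp
  intro i
  have hvan : ∀ k : Fin n, ∃ c : ℝ, ∀ x,
      fderiv ℝ (u i) x (EuclideanSpace.single k 1) / φ i x = c := by
    intro k
    have hv := vanish hn4 Φ hΦ u hu (fun i x => H i (fun j => u j x)) hh
      (fun i x => hHnonneg i _) hsol φ hφ hφ0 _ hr hFd hlin M hM hP0 K hK hpsd Λ hΛ0
      (fun i x v => hΛ _ (hG i x) v) (EuclideanSpace.single k 1)
      (fun i x => fderiv ℝ (u i) x (EuclideanSpace.single k 1))
      (fun i x => fderiv ℝ (u i) x (EuclideanSpace.single k 1) / φ i x)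
      (fun _ => rfl) (fun _ => rfl) (hneg _)
    have hw2 : ContDiff ℝ 2 (fun x => fderiv ℝ (u i) x (EuclideanSpace.single k 1)) :=
      contDiff_D (k := 2) (u i) (hu i) _
    refine sigma_const _ ((hw2.div (hφ i) (hφ0 i)).differentiable (by norm_num))
      (gradient (u i)) (fun x hx => ?_) (fun x hx => ?_)
    · simp [fderiv_zero_of_grad _ _ hx]
    · by_contra hne
      exact (Amul_pos Φ hΦ'pos hΦell _ _ hx hne).ne' (hv i x)
  choose c hc using hvan
  have hgc : ∀ x, gradient (u i) x = φ i x • (WithLp.toLp 2 c : EE n) := by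
    intro x
    ext k
    have h1 := inner_grad (u i) x (EuclideanSpace.single k 1)
    have h2 := hc k x
    rw [div_eq_iff (hφ0 i x)] at h2
    rw [h2, EuclideanSpace.inner_single_right] at h1
    simp at h1
    simp [h1, mul_comm]
  have hc0 := endgame Φ hΦ hΦ'pos (u i) (hu i) _ (fun x => hHnonneg i (fun j => u j x)) (hsol i)
    M (hM i) K (hK i) (φ i) (hφ i) (hφ0 i) _ hgc
  refine is_const_of_fderiv_eq_zero (hud i) fun x => fderiv_zero_of_grad _ _ ?_
  rw [hgc, hc0, smul_zero]
end
end

section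
/- (Radial stability inequality) Let n ≥ 2, m ≥ 1, p > 1, and let u = (u_1,…,u_m) be a radial stable solution of the p-Laplacian system −div(|∇u_i|^{p−2}∇u_i) = H_i(u) on ℝⁿ, i.e. u_i(x) = v_i(|x|) with v_i : [0,∞) → ℝ of class C², and ∂_j H_i(u(x)) ∂_i H_j(u(x)) > 0 for all i, j, x. Then for every φ ∈ L^∞(ℝⁿ) ∩ W^{1,2}(ℝⁿ) with compact support: (n−1) ∑_{i=1}^m ∫_{ℝⁿ} |v_i'(|x|)|^p |x|^{−2} φ(x)² dx ≤ (p−1) ∑_{i=1}^m ∫_{ℝⁿ} |v_i'(|x|)|^p |∇φ(x)|² dx + ∑_{i,j=1}^m ∫_{ℝⁿ} ( ∂_j H_i(u(x)) − √(∂_j H_i(u(x)) ∂_i H_j(u(x))) ) v_i'(|x|) v_j'(|x|) φ(x)² dx. -/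
open MeasureTheory Metric Finset Filter
open scoped RealInnerProductSpace

noncomputable section

/-- The linearized coefficient matrix of the p-Laplacian,
`A(η) = |η|^{p-2} Id + (p-2)|η|^{p-4} η ηᵀ`, acting on a vector `v`. -/
def pAmul {n : ℕ} (p : ℝ) (η v : EuclideanSpace ℝ (Fin n)) :
    EuclideanSpace ℝ (Fin n) :=
  ‖η‖ ^ (p - 2) • v + ((p - 2) * ‖η‖ ^ (p - 4) * ⟪η, v⟫) • η

lemma aux_div_zero {n : ℕ} (hn : 2 ≤ n)
    (G : EuclideanSpace ℝ (Fin n) → EuclideanSpace ℝ (Fin n))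
    (hd : Differentiable ℝ G) (hc : HasCompactSupport G)
    (hi : Integrable (fun x => vdiv G x)) : ∫ x, vdiv G x = 0 := by
  obtain ⟨k, rfl⟩ : ∃ k, n = k + 1 := ⟨n - 1, by omega⟩
  obtain ⟨R, hR⟩ : ∃ R : ℝ, ∀ x, G x ≠ 0 → ‖x‖ < R := by
    obtain ⟨R, hR⟩ := hc.isBounded.subset_ball 0
    exact ⟨R, fun x hx => by simpa using hR (subset_tsupport _ hx)⟩
  have hR2 : ∀ x, vdiv G x ≠ 0 → ‖x‖ ≤ R := by
    intro x hx
    by_contra hxR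
    apply hx
    have : fderiv ℝ G x = 0 := by
      have : G =ᶠ[nhds x] fun _ => 0 := by
        have : ∀ᶠ y in nhds x, R < ‖y‖ :=
          continuous_norm.continuousAt.eventually (lt_mem_nhds (not_le.1 hxR))
        filter_upwards [this] with y hy
        by_contra h
        exact absurd (hR y h) (not_lt.2 hy.le)
      rw [this.fderiv_eq]; simp
    simp [vdiv, this]
  set L := EuclideanSpace.equiv (Fin (k+1)) ℝ with hL
  set f : (Fin (k+1) → ℝ) → (Fin (k+1) → ℝ) := fun y => L (G (L.symm y)) with hf
  set f' : (Fin (k+1) → ℝ) → ((Fin (k+1) → ℝ) →L[ℝ] (Fin (k+1) → ℝ)) := fun y =>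
    (L : _ →L[ℝ] _).comp ((fderiv ℝ G (L.symm y)).comp (L.symm : _ →L[ℝ] _)) with hf'
  have hdf : ∀ y, HasFDerivAt f (f' y) y := by
    intro y
    have h1 := (hd (L.symm y)).hasFDerivAt
    exact (L.hasFDerivAt.comp y (h1.comp y L.symm.hasFDerivAt))
  have hdiv : ∀ y, ∑ i, f' y (Pi.single i 1) i = vdiv G (WithLp.toLp 2 y) := by
    intro y
    simp only [vdiv, hf']
    rfl
  set M : ℝ := |R| + 1
  have hle : (fun _ => -M : Fin (k+1) → ℝ) ≤ fun _ => M := fun i => by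
    have := abs_nonneg R
    simp only [M]; linarith
  have hint : Integrable (fun y => vdiv G (WithLp.toLp 2 y)) :=
    ((PiLp.volume_preserving_toLp (Fin (k+1))).integrable_comp_emb
      (MeasurableEquiv.toLp 2 _).measurableEmbedding).2 hi
  have key := integral_divergence_of_hasFDerivAt_off_countable (fun _ => -M) (fun _ => M) hle
    f f' ∅ Set.countable_empty (fun y _ => (hdf y).continuousAt.continuousWithinAt)
    (fun y _ => hdf y) (by simp only [hdiv]; exact hint.integrableOn)
  have hface : ∀ (i : Fin (k+1)) (y : Fin (k+1) → ℝ), |y i| = M → f y = 0 := by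
    intro i y hy
    simp only [hf]
    have : G (L.symm y) = 0 := by
      by_contra h
      have h1 := hR _ h
      have h2 : |y i| ≤ ‖L.symm y‖ := by
        exact PiLp.norm_apply_le (L.symm y) i
      have := le_abs_self R
      simp only [M] at hy
      linarith
    simp [this]
  have hM : |M| = M := abs_of_nonneg (by positivity)
  have hz : ∑ i : Fin (k + 1),
        ((∫ x in Set.Icc ((fun _ => -M : Fin (k+1) → ℝ) ∘ i.succAbove) ((fun _ => M) ∘ i.succAbove), f (i.insertNth M x) i) - ∫ x in Set.Icc ((fun _ => -M: Fin (k+1) → ℝ) ∘ i.succAbove) ((fun _ => M) ∘ i.succAbove), f (i.insertNth (-M) x) i) = 0 := by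
    apply Finset.sum_eq_zero
    intro i _
    have h1 : ∀ x, f (i.insertNth M x) i = 0 := fun x => by
      rw [hface i _ (by simpa using hM)]; rfl
    have h2 : ∀ x, f (i.insertNth (-M) x) i = 0 := fun x => by
      rw [hface i _ (by simpa using hM)]; rfl
    simp [h1, h2]
  rw [hz] at key
  simp only [hdiv] at key
  rw [← (PiLp.volume_preserving_toLp (Fin (k+1))).integral_comp
      (MeasurableEquiv.toLp 2 _).measurableEmbedding, ← key]
  symm
  apply setIntegral_eq_integral_of_forall_compl_eq_zero
  intro y hy
  by_contra h
  apply hy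
  have h1 := hR2 _ h
  have h3 := le_abs_self R
  have h2 : ∀ i, |y i| ≤ M := fun i => by
    have := PiLp.norm_apply_le (WithLp.toLp 2 y) i
    simp only [Real.norm_eq_abs] at this
    simp only [M]; linarith
  exact ⟨fun i => (abs_le.1 (h2 i)).1, fun i => (abs_le.1 (h2 i)).2⟩

lemma aux_polar_nonneg {E : Type*} [NormedAddCommGroup E] [InnerProductSpace ℝ E]
    [FiniteDimensional ℝ E] [MeasurableSpace E] [BorelSpace E] [Nontrivial E] (D : E → ℝ)
    (D0 : E → ℝ → ℝ)
    (hle : ∀ θ, ‖θ‖ = 1 → ∀ r : ℝ, 0 < r → D0 θ r ≤ D (r • θ))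
    (hint : ∀ θ, ‖θ‖ = 1 → Integrable (fun x : E => D0 θ ‖x‖))
    (hnn : ∀ θ, ‖θ‖ = 1 → 0 ≤ ∫ x : E, D0 θ ‖x‖) :
    0 ≤ ∫ x, D x := by
  by_cases hD : Integrable D
  swap
  · rw [integral_undef hD]
  set μ : Measure E := volume
  set d := Module.finrank ℝ E - 1
  have hmp := μ.measurePreserving_homeomorphUnitSphereProd
  -- integrability in polar coordinates
  have hsymm : ∀ x : ({0}ᶜ : Set E), D x = (fun q : Metric.sphere (0:E) 1 × Set.Ioi (0:ℝ) => D ((q.2:ℝ) • (q.1 : E))) (homeomorphUnitSphereProd E x) := by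
    intro x
    have hx : ‖(x:E)‖ ≠ 0 := norm_ne_zero_iff.2 x.2
    simp [smul_smul, hx]
  have hIprod : Integrable (fun q : Metric.sphere (0:E) 1 × Set.Ioi (0:ℝ) => D ((q.2:ℝ) • (q.1 : E)))
      (μ.toSphere.prod (.volumeIoiPow d)) := by
    rw [← hmp.integrable_comp_emb (Homeomorph.measurableEmbedding _)]
    have h1 : IntegrableOn D ({0}ᶜ : Set E) μ := hD.integrableOn
    rw [integrableOn_iff_comap_subtypeVal (by measurability)] at h1
    exact h1.congr (.of_forall hsymm)
  have hI : ∫ x, D x = ∫ θ, ∫ r : Set.Ioi (0:ℝ), D ((r:ℝ) • (θ : E)) ∂(.volumeIoiPow d) ∂μ.toSphere := by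
    rw [← integral_prod _ hIprod, ← hmp.integral_comp (Homeomorph.measurableEmbedding _)]
    have : ∫ x, D x ∂μ = ∫ x : ({(0)}ᶜ : Set E), D x.1 ∂(μ.comap (↑)) := by
      rw [integral_subtype_comap (measurableSet_singleton _).compl D,
        restrict_compl_singleton]
    rw [this]
    exact integral_congr_ae (.of_forall hsymm)
  rw [hI]
  apply integral_nonneg
  intro θ
  have hθ : ‖(θ:E)‖ = 1 := by simp
  show 0 ≤ ∫ r : Set.Ioi (0:ℝ), D ((r:ℝ) • (θ : E)) ∂(.volumeIoiPow d)
  by_cases hDr : Integrable (fun r : Set.Ioi (0:ℝ) => D ((r:ℝ) • (θ : E))) (.volumeIoiPow d)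
  swap
  · rw [integral_undef hDr]
  have hμ : μ.toSphere ≠ 0 := μ.toSphere_ne_zero
  -- the radial side
  have hradI : Integrable (fun q : Metric.sphere (0:E) 1 × Set.Ioi (0:ℝ) => D0 θ q.2)
      (μ.toSphere.prod (.volumeIoiPow d)) := by
    rw [← hmp.integrable_comp_emb (Homeomorph.measurableEmbedding _)]
    have h1 : IntegrableOn (fun x : E => D0 θ ‖x‖) ({0}ᶜ : Set E) μ := (hint θ hθ).integrableOn
    rw [integrableOn_iff_comap_subtypeVal (by measurability)] at h1
    exact h1.congr (.of_forall fun x => by simp)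
  have hradI' : Integrable (fun r : Set.Ioi (0:ℝ) => D0 θ r) (.volumeIoiPow d) :=
    (Integrable.comp_snd_iff (β := Set.Ioi 0) (f := fun r : Set.Ioi (0:ℝ) => D0 θ r) hμ).1 hradI
  have hrad : ∫ x : E, D0 θ ‖x‖ = μ.toSphere.real Set.univ • ∫ r : Set.Ioi (0:ℝ), D0 θ r ∂(.volumeIoiPow d) := by
    rw [← integral_fun_snd (fun r : Set.Ioi (0:ℝ) => D0 θ r), ← hmp.integral_comp (Homeomorph.measurableEmbedding _)]
    have : ∫ x, D0 θ ‖x‖ ∂μ = ∫ x : ({(0)}ᶜ : Set E), D0 θ ‖x.1‖ ∂(μ.comap (↑)) := by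
      rw [integral_subtype_comap (measurableSet_singleton _).compl (fun x => D0 θ ‖x‖),
        restrict_compl_singleton]
    rw [this]
    exact integral_congr_ae (.of_forall fun x => by simp)
  have hpos : 0 < μ.toSphere.real Set.univ := by
    rw [measureReal_def, ENNReal.toReal_pos_iff]
    exact ⟨pos_iff_ne_zero.2 (fun h => hμ (Measure.measure_univ_eq_zero.1 h)), measure_lt_top _ _⟩
  have h0 : 0 ≤ ∫ r : Set.Ioi (0:ℝ), D0 θ r ∂(.volumeIoiPow d) := by
    have := hnn θ hθ
    rw [hrad, smul_eq_mul] at this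
    exact nonneg_of_mul_nonneg_right this hpos
  exact h0.trans (integral_mono hradI' hDr fun r => hle θ hθ r r.2)

lemma aux_radial_integrable {n : ℕ} (hn : 2 ≤ n) (g T : ℝ → ℝ) (hT : Continuous T)
    (R : ℝ) (hTR : ∀ r, R < r → T r = 0) (h : ∀ r, 0 < r → r * g r = T r) :
    Integrable (fun x : EuclideanSpace ℝ (Fin n) => g ‖x‖) := by
  obtain ⟨k, rfl⟩ : ∃ k, n = k + 2 := ⟨n - 2, by omega⟩
  rw [integrable_fun_norm_addHaar (μ := (volume : Measure (EuclideanSpace ℝ (Fin (k+2))))) (f := g)]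
  have hE : Set.EqOn (fun r : ℝ => r ^ k * T r) (fun y : ℝ => y ^ (Module.finrank ℝ (EuclideanSpace ℝ (Fin (k+2))) - 1) • g y) (Set.Ioi 0) := by
    intro r hr
    simp only [finrank_euclideanSpace, Fintype.card_fin, smul_eq_mul, ← h r hr]
    rw [show k + 2 - 1 = k + 1 by omega]
    ring
  refine IntegrableOn.congr_fun ?_ hE measurableSet_Ioi
  have h1 : IntegrableOn (fun r : ℝ => r ^ k * T r) (Set.Icc 0 R) :=
    (by fun_prop : Continuous (fun r : ℝ => r ^ k * T r)).integrableOn_Icc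
  refine h1.of_forall_sdiff_eq_zero measurableSet_Ioi ?_
  rintro r ⟨hr0, hr⟩
  have : R < r := by
    by_contra hh
    exact hr ⟨le_of_lt hr0, not_lt.1 hh⟩
  simp [hTR r this]

lemma aux_radial_div {n : ℕ} (hn : 2 ≤ n) (κ κ' T : ℝ → ℝ) (hκc : Continuous κ)
    (hκ : ∀ r, 0 < r → HasDerivAt κ (κ' r) r)
    (hT : Continuous T)
    (R : ℝ) (hTR : ∀ r, R < r → T r = 0) (hκR : ∀ r, R < r → κ r = 0)
    (h : ∀ r, 0 < r → r * (κ' r + ((n:ℝ) - 1) * κ r / r) = T r) :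
    ∫ x : EuclideanSpace ℝ (Fin n), (κ' ‖x‖ + ((n:ℝ) - 1) * κ ‖x‖ / ‖x‖) = 0 := by
  obtain ⟨k, rfl⟩ : ∃ k, n = k + 2 := ⟨n - 2, by omega⟩
  have hint := aux_radial_integrable hn (fun r => κ' r + (((k+2:ℕ):ℝ) - 1) * κ r / r) T hT R hTR h
  rw [integrable_fun_norm_addHaar (μ := (volume : Measure (EuclideanSpace ℝ (Fin (k+2)))))
    (f := fun r => κ' r + (((k+2:ℕ):ℝ) - 1) * κ r / r)] at hint
  rw [integral_fun_norm_addHaar (μ := (volume : Measure (EuclideanSpace ℝ (Fin (k+2)))))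
    (fun r => κ' r + (((k+2:ℕ):ℝ) - 1) * κ r / r)]
  have hk : k + 2 - 1 = k + 1 := by omega
  simp only [finrank_euclideanSpace, Fintype.card_fin, smul_eq_mul, hk] at hint ⊢
  have := integral_Ioi_of_hasDerivAt_of_tendsto (a := 0) (m := 0) (f := fun r => r ^ (k+1) * κ r)
    (f' := fun r => r ^ (k+1) * (κ' r + (((k + 2 : ℕ):ℝ) - 1) * κ r / r))
    (by fun_prop) ?_ hint ?_
  · rw [this]; simp
  · intro r hr
    have hr : 0 < r := hr
    refine ((hasDerivAt_pow (k+1) r).fun_mul (hκ r hr)).congr_deriv ?_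
    push_cast
    rw [pow_succ]
    field_simp
    ring
  · apply tendsto_const_nhds.congr'
    filter_upwards [eventually_gt_atTop R] with r hr
    simp [hκR r hr]

lemma aux_null {n : ℕ} (hn : 2 ≤ n) (w w' : ℝ → ℝ) (hw : ∀ r, HasDerivAt w (w' r) r) :
    ∀ᵐ x : EuclideanSpace ℝ (Fin n), w ‖x‖ = 0 → w' ‖x‖ = 0 := by
  have : Nonempty (Fin n) := ⟨⟨0, by omega⟩⟩
  have : Nontrivial (EuclideanSpace ℝ (Fin n)) := inferInstance
  set Z : Set ℝ := {r | w r = 0 ∧ w' r ≠ 0}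
  have hZ : Z.Countable := by
    have hd : DiscreteTopology Z := by
      rw [discreteTopology_subtype_iff]
      rintro r ⟨h0, h1⟩
      have := (hw r).eventually_ne (c := 0) h1
      rw [← disjoint_iff, Filter.disjoint_principal_right]
      filter_upwards [this] with z hz hzZ using hz hzZ.1
    exact (HereditarilyLindelofSpace.isLindelof Z).countable hd
  have hnull : volume (⋃ r ∈ Z, Metric.sphere (0 : EuclideanSpace ℝ (Fin n)) r) = 0 := by
    rw [measure_biUnion_null_iff hZ]
    intro r _
    exact Measure.addHaar_sphere _ _ _
  filter_upwards [measure_eq_zero_iff_ae_notMem.1 hnull] with x hx h0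
  by_contra h1
  exact hx (Set.mem_biUnion (show ‖x‖ ∈ Z from ⟨h0, h1⟩) (by simp))

lemma aux_vdiv_smul {n : ℕ} (g : EuclideanSpace ℝ (Fin n) → ℝ)
    (F : EuclideanSpace ℝ (Fin n) → EuclideanSpace ℝ (Fin n)) (x : EuclideanSpace ℝ (Fin n))
    (hg : DifferentiableAt ℝ g x) (hF : DifferentiableAt ℝ F x) :
    vdiv (fun y => g y • F y) x = g x * vdiv F x + fderiv ℝ g x (F x) := by
  have h2 : F x = ∑ i, (F x i) • EuclideanSpace.single i (1:ℝ) := by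
    ext j
    simp [Finset.sum_apply, Pi.single_apply]
  unfold vdiv
  rw [fderiv_fun_smul hg hF]
  conv_rhs => rw [h2, map_sum]
  rw [Finset.mul_sum, ← Finset.sum_add_distrib]
  refine Finset.sum_congr rfl fun i _ => ?_
  simp [mul_comm]

lemma aux_vdiv_id {n : ℕ} (x : EuclideanSpace ℝ (Fin n)) :
    vdiv (fun y => y) x = n := by
  simp [vdiv]

lemma aux_hasFDerivAt_norm {n : ℕ} (x : EuclideanSpace ℝ (Fin n)) (hx : x ≠ 0) :
    HasFDerivAt (fun y => ‖y‖) ((1 / ‖x‖) • innerSL ℝ x) x := by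
  have hx' : ‖x‖ ≠ 0 := norm_ne_zero_iff.2 hx
  have h1 := (hasStrictFDerivAt_norm_sq x).hasFDerivAt.sqrt (by positivity)
  have h2 : (fun y : EuclideanSpace ℝ (Fin n) => √(‖y‖ ^ 2)) = fun y => ‖y‖ := by
    funext y; simp
  rw [h2] at h1
  refine h1.congr_fderiv ?_
  ext y
  simp [Real.sqrt_sq]
  field_simp

lemma aux_radial_fderiv {n : ℕ} (g : ℝ → ℝ) (g' : ℝ) (x : EuclideanSpace ℝ (Fin n)) (hx : x ≠ 0)
    (hg : HasDerivAt g g' ‖x‖) :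
    HasFDerivAt (fun y => g ‖y‖) ((g' / ‖x‖) • innerSL ℝ x) x := by
  refine (hg.comp_hasFDerivAt x (aux_hasFDerivAt_norm x hx)).congr_fderiv ?_
  rw [smul_smul]; congr 1; ring

lemma aux_grad {n : ℕ} (u : EuclideanSpace ℝ (Fin n) → ℝ) (v : ℝ → ℝ) (hv : Differentiable ℝ v)
    (hrad : ∀ x, u x = v ‖x‖) (x : EuclideanSpace ℝ (Fin n)) (hx : x ≠ 0) :
    gradient u x = (deriv v ‖x‖ / ‖x‖) • x := by
  have h := aux_radial_fderiv v _ x hx (hv ‖x‖).hasDerivAt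
  rw [← (funext hrad : u = fun y => v ‖y‖)] at h
  apply HasGradientAt.gradient
  rw [hasGradientAt_iff_hasFDerivAt]
  refine h.congr_fderiv ?_
  ext y
  simp

lemma aux_v0 {n : ℕ} (hn : 2 ≤ n) (u : EuclideanSpace ℝ (Fin n) → ℝ) (v : ℝ → ℝ)
    (hu : Differentiable ℝ u) (hv : Differentiable ℝ v)
    (hrad : ∀ x, u x = v ‖x‖) : deriv v 0 = 0 := by
  set e : EuclideanSpace ℝ (Fin n) := EuclideanSpace.single ⟨0, by omega⟩ 1
  have he : ‖e‖ = 1 := by simp [e]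
  have h1 : DifferentiableAt ℝ (fun t : ℝ => v |t|) 0 := by
    have : (fun t : ℝ => v |t|) = fun t => u (t • e) := by
      funext t; rw [hrad, norm_smul, he]; simp
    rw [this]
    fun_prop
  have h2 := h1.hasDerivAt
  set c := deriv (fun t : ℝ => v |t|) 0
  have h3 : HasDerivWithinAt v c (Set.Ici 0) 0 :=
    h2.hasDerivWithinAt.congr (fun t ht => by rw [abs_of_nonneg ht]) (by simp)
  have h4 : HasDerivAt (fun t : ℝ => v |t|) (-c) 0 := by
    have : HasDerivAt (fun t : ℝ => v |t|) c (-0) := by simpa using h2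
    have := HasDerivAt.comp (0:ℝ) this (hasDerivAt_neg 0)
    have h5 : ((fun t : ℝ => v |t|) ∘ Neg.neg) = fun t : ℝ => v |t| := by
      funext t; simp
    rw [h5] at this
    simpa using this
  have hc : c = -c := h2.unique h4
  have h6 : deriv v 0 = c :=
    (uniqueDiffWithinAt_Ici (0:ℝ)).eq_deriv _ (hv 0).hasDerivAt.hasDerivWithinAt h3
  linarith

lemma aux_dpow (q s : ℝ) (hs : s ≠ 0) :
    HasDerivAt (fun t : ℝ => |t| ^ q * t) ((q + 1) * |s| ^ q) s := by
  have h1 := (hasDerivAt_abs hs).rpow_const (p := q) (Or.inl (abs_ne_zero.2 hs))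
  refine (h1.fun_mul (hasDerivAt_id' s)).congr_deriv ?_
  have h2 : |s| ^ q = |s| ^ (q - 1) * |s| := by
    rw [← Real.rpow_add_one (abs_ne_zero.2 hs)]; ring_nf
  have h3 : (SignType.sign s : ℝ) * s = |s| := by simp
  linear_combination (q * |s| ^ (q-1)) * h3 - q * h2

lemma aux_ode {n : ℕ} (hn : 2 ≤ n) (p : ℝ) (u : EuclideanSpace ℝ (Fin n) → ℝ) (v : ℝ → ℝ)
    (hv : ContDiff ℝ 2 v) (hrad : ∀ x, u x = v ‖x‖) (x : EuclideanSpace ℝ (Fin n)) (hx : x ≠ 0)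
    (hvx : deriv v ‖x‖ ≠ 0) :
    vdiv (fun y => ‖gradient u y‖ ^ (p - 2) • gradient u y) x =
      (p - 1) * |deriv v ‖x‖| ^ (p - 2) * deriv (deriv v) ‖x‖
        + ((n:ℝ) - 1) / ‖x‖ * (|deriv v ‖x‖| ^ (p - 2) * deriv v ‖x‖) := by
  have hx' : ‖x‖ ≠ 0 := norm_ne_zero_iff.2 hx
  have hv1 : Differentiable ℝ v := hv.differentiable (by norm_num)
  have hv2 : Differentiable ℝ (deriv v) :=
    (hv.iterate_deriv' 1 1).differentiable (by norm_num)
  set g : ℝ → ℝ := fun r => |deriv v r| ^ (p-2) * deriv v r / r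
  have heq : (fun y => ‖gradient u y‖ ^ (p - 2) • gradient u y) =ᶠ[nhds x]
      fun y => g ‖y‖ • y := by
    filter_upwards [isOpen_ne.mem_nhds hx] with y hy
    have hy' : ‖y‖ ≠ 0 := norm_ne_zero_iff.2 hy
    rw [aux_grad u v hv1 hrad y hy, norm_smul, smul_smul]
    simp only [norm_div, Real.norm_eq_abs, abs_norm, g]
    rw [div_mul_cancel₀ _ hy', mul_div_assoc]
  have hg : HasDerivAt g (((p - 1) * |deriv v ‖x‖| ^ (p-2) * deriv (deriv v) ‖x‖ * ‖x‖ -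
      |deriv v ‖x‖| ^ (p-2) * deriv v ‖x‖) / ‖x‖ ^ 2) ‖x‖ := by
    have h1 := (aux_dpow (p-2) _ hvx).comp ‖x‖ (hv2 ‖x‖).hasDerivAt
    refine (h1.div (hasDerivAt_id' ‖x‖) hx').congr_deriv ?_
    simp only [Function.comp]
    ring
  have hG := aux_radial_fderiv g _ x hx hg
  have : vdiv (fun y => ‖gradient u y‖ ^ (p - 2) • gradient u y) x = vdiv (fun y => g ‖y‖ • y) x := by
    unfold vdiv; rw [heq.fderiv_eq]
  rw [this, aux_vdiv_smul _ _ _ hG.differentiableAt differentiableAt_fun_id, aux_vdiv_id, hG.fderiv]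
  simp [g]
  field_simp
  ring

lemma aux_radial_E {n : ℕ} (hn : 2 ≤ n) (p : ℝ) (hp : 1 < p) (w w' h h' f f' : ℝ → ℝ)
    (hw : ∀ r, HasDerivAt w (w' r) r) (hw' : Continuous w') (hw0 : w 0 = 0)
    (hh : ∀ r, HasDerivAt h (h' r) r) (hh' : Continuous h')
    (hf : ∀ r, HasDerivAt f (f' r) r) (hf' : Continuous f') (R : ℝ) (hfR : ∀ r, R < r → f r = 0) :
    ∃ E : ℝ → ℝ, Integrable (fun x : EuclideanSpace ℝ (Fin n) => E ‖x‖) ∧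
      ∫ x : EuclideanSpace ℝ (Fin n), E ‖x‖ = 0 ∧
      (∀ r, 0 < r → w r ≠ 0 →
        h r = -((p - 1) * |w r| ^ (p - 2) * w' r + ((n:ℝ) - 1) / r * (|w r| ^ (p - 2) * w r)) →
        E r = (p - 1) * |w r| ^ (p - 2) * w' r * (w' r * f r ^ 2 + 2 * w r * f r * f' r)
          + ((n:ℝ) - 1) * |w r| ^ p * f r ^ 2 / r ^ 2 - h' r * w r * f r ^ 2) ∧
      (∀ r, 0 < r → w r = 0 → w' r = 0 → E r = 0) := by
  have hwc : Continuous w := continuous_iff_continuousAt.2 fun r => (hw r).continuousAt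
  have hhc : Continuous h := continuous_iff_continuousAt.2 fun r => (hh r).continuousAt
  have hfc : Continuous f := continuous_iff_continuousAt.2 fun r => (hf r).continuousAt
  set s : ℝ → ℝ := dslope w 0
  have hs : Continuous s := by
    rw [continuous_iff_continuousAt]
    intro r
    by_cases hr : r = 0
    · rw [hr]; exact continuousAt_dslope_same.2 (hw 0).differentiableAt
    · exact (continuousAt_dslope_of_ne hr).2 hwc.continuousAt
  have hsr : ∀ r, 0 < r → w r = r * s r := by
    intro r hr
    have := sub_smul_dslope w 0 r
    simp [hw0] at this
    exact this.symm
  have hpw : Continuous (fun r => |w r| ^ (p-2) * w r) := by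
    have h1 : Continuous (fun t : ℝ => |t| ^ (p-2) * t) := by
      have h2 := (contDiff_norm_rpow (E := ℝ) hp).continuous_deriv le_rfl
      have h3 : deriv (fun t : ℝ => ‖t‖ ^ p) = fun t => p * (|t| ^ (p-2) * t) := by
        funext t
        have := (hasDerivAt_abs_rpow t hp).deriv
        simp only [Real.norm_eq_abs]
        rw [this]; ring
      rw [h3] at h2
      have h4 := h2.const_mul p⁻¹
      refine h4.congr fun t => ?_
      field_simp
    exact h1.comp hwc
  have hp1 : Continuous (fun r => |w r| ^ (p-1)) :=
    hwc.abs.rpow_const fun _ => Or.inr (by linarith)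
  have hp0 : Continuous (fun r => |w r| ^ p) :=
    hwc.abs.rpow_const fun _ => Or.inr (by linarith)
  have hps : ∀ r, 0 < r → |w r| ^ p = r * (|w r| ^ (p-1) * |s r|) := by
    intro r hr
    have h1 : |w r| = r * |s r| := by rw [hsr r hr, abs_mul, abs_of_pos hr]
    have h2 : |w r| ^ p = |w r| ^ (p-1) * |w r| := by
      have := Real.rpow_add_one' (abs_nonneg (w r)) (y := p-1) (by linarith)
      simpa using this
    rw [h2]
    nth_rewrite 2 [h1]
    ring
  set κ : ℝ → ℝ := fun r => -(w r * h r * f r ^ 2) - ((n:ℝ) - 1) * (|w r| ^ (p-1) * |s r|) * f r ^ 2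
    with hκdef
  set κ' : ℝ → ℝ := fun r => -(w' r * h r * f r ^ 2 + w r * h' r * f r ^ 2 + 2 * w r * h r * f r * f' r)
    - ((n:ℝ) - 1) * (p * (|w r| ^ (p-2) * w r) * w' r * f r ^ 2 / r - |w r| ^ p * f r ^ 2 / r ^ 2
      + 2 * |w r| ^ p * f r * f' r / r) with hκ'def
  set T : ℝ → ℝ := fun r => r * -(w' r * h r * f r ^ 2 + w r * h' r * f r ^ 2 + 2 * w r * h r * f r * f' r)
    - ((n:ℝ) - 1) * (p * (|w r| ^ (p-2) * w r) * w' r * f r ^ 2 - (|w r| ^ (p-1) * |s r|) * f r ^ 2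
      + 2 * |w r| ^ p * f r * f' r) + ((n:ℝ) - 1) * κ r with hTdef
  have hκc : Continuous κ := by fun_prop
  have hTc : Continuous T := by fun_prop
  have hκR : ∀ r, R < r → κ r = 0 := fun r hr => by simp [κ, hfR r hr]
  have hTR : ∀ r, R < r → T r = 0 := fun r hr => by simp [T, κ, hfR r hr]
  have hT : ∀ r, 0 < r → r * (κ' r + ((n:ℝ) - 1) * κ r / r) = T r := by
    intro r hr
    have h1 := hps r hr
    have h2 : |w r| ^ (p-1) * |s r| = |w r| ^ p / r := by rw [h1]; field_simp
    simp only [hTdef, hκ'def, h2]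
    field_simp
  have hκd : ∀ r, 0 < r → HasDerivAt κ (κ' r) r := by
    intro r hr
    have e : κ =ᶠ[nhds r] fun r => -(w r * h r * f r ^ 2) - ((n:ℝ) - 1) * (|w r| ^ p / r) * f r ^ 2 := by
      filter_upwards [lt_mem_nhds hr] with t ht
      have h2 : |w t| ^ (p-1) * |s t| = |w t| ^ p / t := by rw [hps t ht]; field_simp
      simp only [hκdef, h2]
    refine HasDerivAt.congr_of_eventuallyEq ?_ e
    have a1 := ((hw r).fun_mul (hh r)).fun_mul ((hf r).fun_pow 2)
    have a2 : HasDerivAt (fun r => |w r| ^ p) (p * |w r| ^ (p-2) * w r * w' r) r :=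
      (hasDerivAt_abs_rpow (w r) hp).comp r (hw r)
    have a3 := ((a2.fun_div (hasDerivAt_id' r) hr.ne').const_mul ((n:ℝ) - 1)).fun_mul ((hf r).fun_pow 2)
    refine (a1.fun_neg.fun_sub a3).congr_deriv ?_
    simp only [hκ'def]
    field_simp
    ring
  refine ⟨fun r => κ' r + ((n:ℝ) - 1) * κ r / r,
    aux_radial_integrable hn (fun r => κ' r + ((n:ℝ) - 1) * κ r / r) T hTc R hTR hT,
    aux_radial_div hn κ κ' T hκc hκd hTc R hTR hκR hT, ?_, ?_⟩
  · intro r hr hwr hode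
    have h2 : |w r| ^ (p-1) * |s r| = |w r| ^ p / r := by rw [hps r hr]; field_simp
    have h3 : |w r| ^ p = |w r| ^ (p-2) * w r ^ 2 := by
      rw [← sq_abs (w r), ← Real.rpow_natCast, ← Real.rpow_add (abs_pos.2 hwr)]
      congr 1; push_cast; ring
    simp only [hκ'def, hκdef, h2, h3, hode]
    field_simp
    ring
  · intro r hr h0 h0'
    simp [hκ'def, hκdef, h0, h0', Real.zero_rpow (show p ≠ 0 by linarith),
      Real.zero_rpow (show p - 1 ≠ 0 by linarith)]

lemma aux_grad_contDiff {n : ℕ} (u : EuclideanSpace ℝ (Fin n) → ℝ) (hu : ContDiff ℝ 2 u) :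
    ContDiff ℝ 1 (gradient u) := by
  have h1 : ContDiff ℝ 1 (fderiv ℝ u) := hu.fderiv_right (by norm_num)
  exact ((InnerProductSpace.toDual ℝ (EuclideanSpace ℝ (Fin n))).symm.toContinuousLinearEquiv.contDiff).comp h1

lemma aux_grad_inner {n : ℕ} (u : EuclideanSpace ℝ (Fin n) → ℝ) (x y : EuclideanSpace ℝ (Fin n)) :
    fderiv ℝ u x y = ⟪gradient u x, y⟫ := by
  simp [gradient]

lemma aux_pow2 (p c : ℝ) (hc : c ≠ 0) : |c| ^ (p - 4) * c ^ 2 = |c| ^ (p - 2) := by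
  rw [← sq_abs, ← Real.rpow_natCast, ← Real.rpow_add (abs_pos.2 hc)]
  congr 1; push_cast; ring

lemma aux_pow2' (p c : ℝ) (hc : c ≠ 0) : |c| ^ (p - 2) * c ^ 2 = |c| ^ p := by
  rw [← sq_abs, ← Real.rpow_natCast, ← Real.rpow_add (abs_pos.2 hc)]
  congr 1; push_cast; ring

lemma aux_pow1 (p c : ℝ) (hc : c ≠ 0) : |c| ^ (p - 2) * |c| = |c| ^ (p - 1) := by
  rw [← Real.rpow_add_one (abs_ne_zero.2 hc)]
  congr 1; ring

lemma aux_pAmul {n : ℕ} (p c : ℝ) (hc : c ≠ 0) (y b : EuclideanSpace ℝ (Fin n)) (hy : y ≠ 0) :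
    pAmul p ((c / ‖y‖) • y) b =
      |c| ^ (p - 2) • (b + ((p - 2) * (⟪y, b⟫ / ‖y‖) / ‖y‖) • y) := by
  have hy' : ‖y‖ ≠ 0 := norm_ne_zero_iff.2 hy
  have h1 : ‖(c / ‖y‖) • y‖ = |c| := by
    rw [norm_smul, norm_div, norm_norm, Real.norm_eq_abs]; field_simp
  unfold pAmul
  rw [h1, smul_add, smul_smul, smul_smul, ← aux_pow2 p c hc, real_inner_smul_left]
  congr 2
  field_simp

lemma aux_pAmul_norm {n : ℕ} (p c : ℝ) (hc : c ≠ 0) (y b : EuclideanSpace ℝ (Fin n)) (hy : y ≠ 0) :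
    ‖pAmul p ((c / ‖y‖) • y) b‖ ≤ |c| ^ (p - 2) * ((1 + |p - 2|) * ‖b‖) := by
  have hy' : 0 < ‖y‖ := norm_pos_iff.2 hy
  rw [aux_pAmul p c hc y b hy, norm_smul, Real.norm_of_nonneg (by positivity)]
  gcongr
  refine (norm_add_le _ _).trans ?_
  have h2 : |⟪y, b⟫| ≤ ‖y‖ * ‖b‖ := abs_real_inner_le_norm y b
  have h3 : ‖((p - 2) * (⟪y, b⟫ / ‖y‖) / ‖y‖) • y‖ = |p - 2| * (|⟪y, b⟫| / ‖y‖) := by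
    rw [norm_smul, norm_div, norm_mul, norm_div, norm_norm]
    simp only [Real.norm_eq_abs]
    field_simp
  have h4 : |⟪y, b⟫| / ‖y‖ ≤ ‖b‖ := by
    rw [div_le_iff₀ hy']; linarith
  rw [h3]
  nlinarith [abs_nonneg (p-2)]

lemma aux_G {n : ℕ} (p : ℝ) (hp : 1 < p) (hn : 2 ≤ n)
    (u φ : EuclideanSpace ℝ (Fin n) → ℝ) (v : ℝ → ℝ)
    (hu : ContDiff ℝ 2 u) (hv : ContDiff ℝ 2 v) (hrad : ∀ x, u x = v ‖x‖) (hv0 : deriv v 0 = 0)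
    (hφ : ContDiff ℝ 2 φ) (hφ0 : ∀ x, φ x ≠ 0) (b : EuclideanSpace ℝ (Fin n) → ℝ)
    (hb : Continuous b)
    (heq : ∀ x, -vdiv (fun y => pAmul p (gradient u y) (gradient φ y)) x = b x)
    (f f' : ℝ → ℝ)
    (hf : ∀ r, HasDerivAt f (f' r) r) (hf' : Continuous f') (R : ℝ) (hfR : ∀ r, R < r → f r = 0) :
    ∃ S : EuclideanSpace ℝ (Fin n) → ℝ, Integrable S ∧ ∫ x, S x = 0 ∧
      (∀ x, deriv v ‖x‖ ≠ 0 → S x ≤ -(b x / φ x * (deriv v ‖x‖ * f ‖x‖) ^ 2) +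
        (p - 1) * |deriv v ‖x‖| ^ (p - 2) *
          (deriv (deriv v) ‖x‖ * f ‖x‖ + deriv v ‖x‖ * f' ‖x‖) ^ 2) ∧
      (∀ x, deriv v ‖x‖ = 0 → S x = 0) := by
  have hv1 : Differentiable ℝ v := hv.differentiable (by norm_num)
  have hvC : ContDiff ℝ 1 (deriv v) := hv.iterate_deriv' 1 1
  have hv2 : Differentiable ℝ (deriv v) := hvC.differentiable (by norm_num)
  set w := deriv v with hw
  set w' := deriv w with hw'
  have hwd : ∀ r, HasDerivAt w (w' r) r := fun r => (hv2 r).hasDerivAt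
  have hwc : Continuous w := hv2.continuous
  have hw'c : Continuous w' := hvC.continuous_deriv le_rfl
  have hfc : Continuous f := continuous_iff_continuousAt.2 fun r => (hf r).continuousAt
  have hφc : Continuous φ := hφ.continuous
  have hφd : Differentiable ℝ φ := hφ.differentiable (by norm_num)
  have hgφ : ContDiff ℝ 1 (gradient φ) := aux_grad_contDiff φ hφ
  have hgφc : Continuous (gradient φ) := hgφ.continuous
  have hgu : ContDiff ℝ 1 (gradient u) := aux_grad_contDiff u hu
  have hne : ∀ x : EuclideanSpace ℝ (Fin n), w ‖x‖ ≠ 0 → x ≠ 0 := by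
    rintro x hx rfl
    exact hx (by simpa using hv0)
  set ζ : ℝ → ℝ := fun r => w r * f r with hζ
  set ζ' : ℝ → ℝ := fun r => w' r * f r + w r * f' r with hζ'
  have hζd : ∀ r, HasDerivAt ζ (ζ' r) r := fun r => (hwd r).fun_mul (hf r)
  set F : EuclideanSpace ℝ (Fin n) → EuclideanSpace ℝ (Fin n) :=
    fun y => pAmul p (gradient u y) (gradient φ y) with hF
  set g : EuclideanSpace ℝ (Fin n) → ℝ := fun y => ζ ‖y‖ ^ 2 * (φ y)⁻¹ with hg
  set G : EuclideanSpace ℝ (Fin n) → EuclideanSpace ℝ (Fin n) := fun y => g y • F y with hG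
  have hGsupp : ∀ x, R < ‖x‖ → G x = 0 := by
    intro x hx
    simp [hG, hg, hζ, hfR _ hx]
  have hp1 : Continuous (fun r => |w r| ^ (p-1)) :=
    hwc.abs.rpow_const fun _ => Or.inr (by linarith)
  have hp0 : Continuous (fun r => |w r| ^ p) :=
    hwc.abs.rpow_const fun _ => Or.inr (by linarith)
  -- norm bound
  have hGb : ∀ y, ‖G y‖ ≤ ((1 + |p - 2|) * f ‖y‖ ^ 2 * ‖gradient φ y‖ * |φ y|⁻¹) * |w ‖y‖| ^ p := by
    intro y
    by_cases hy : w ‖y‖ = 0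
    · simp [hG, hg, hζ, hy, Real.zero_rpow (show p ≠ 0 by linarith)]
    · have h1 := aux_pAmul_norm p (w ‖y‖) hy y (gradient φ y) (hne y hy)
      rw [← aux_grad u v hv1 hrad y (hne y hy)] at h1
      have h2 : ‖G y‖ = (w ‖y‖ ^ 2 * f ‖y‖ ^ 2 * |φ y|⁻¹) * ‖F y‖ := by
        simp only [hG, hg, hζ, norm_smul, norm_mul, norm_inv, norm_pow, Real.norm_eq_abs, mul_pow, sq_abs]
      rw [h2, ← aux_pow2' p _ hy]
      refine (mul_le_mul_of_nonneg_left h1 (by positivity)).trans (le_of_eq ?_)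
      ring
  -- derivative at zeros
  have hG0 : ∀ x, w ‖x‖ = 0 → HasFDerivAt G (0 : EuclideanSpace ℝ (Fin n) →L[ℝ] EuclideanSpace ℝ (Fin n)) x := by
    intro x hx
    have hGx : G x = 0 := by simp [hG, hg, hζ, hx]
    apply HasFDerivAt.of_isLittleO
    simp only [hGx, sub_zero, zero_apply]
    set C : EuclideanSpace ℝ (Fin n) → ℝ := fun y => (1 + |p - 2|) * f ‖y‖ ^ 2 * ‖gradient φ y‖ * |φ y|⁻¹ with hC
    have hCc : Continuous C := by
      have : Continuous fun y => |φ y|⁻¹ := hφc.abs.inv₀ fun y => abs_ne_zero.2 (hφ0 y)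
      fun_prop
    have o1 : G =O[nhds x] fun y => |w ‖y‖| ^ p := by
      apply Asymptotics.IsBigO.of_bound (C x + 1)
      filter_upwards [hCc.continuousAt.eventually (gt_mem_nhds (lt_add_one (C x)))] with y hy
      refine (hGb y).trans ?_
      rw [Real.norm_of_nonneg (by positivity)]
      gcongr
    have o2 : (fun y => |w ‖y‖| ^ (p-1)) =o[nhds x] fun _ => (1:ℝ) := by
      rw [Asymptotics.isLittleO_one_iff]
      have : Continuous fun y : EuclideanSpace ℝ (Fin n) => |w ‖y‖| ^ (p-1) := hp1.comp continuous_norm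
      have h2 := this.tendsto x
      simpa [hx, Real.zero_rpow (show p - 1 ≠ 0 by linarith)] using h2
    have o3 : (fun y => |w ‖y‖|) =O[nhds x] fun y => y - x := by
      have h1 := (hwd ‖x‖).isBigO_sub
      have h2 := h1.comp_tendsto (continuous_norm.tendsto x)
      have h3 : (fun y : EuclideanSpace ℝ (Fin n) => ‖y‖ - ‖x‖) =O[nhds x] fun y => y - x :=
        Asymptotics.IsBigO.of_bound 1 (.of_forall fun y => by
          simpa using abs_norm_sub_norm_le y x)
      have h4 := h2.trans h3
      simp only [Function.comp_def, hx, sub_zero] at h4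
      exact h4.norm_left
    have o4 := o2.mul_isBigO o3.norm_right
    refine o1.trans_isLittleO ?_
    have h5 : (fun y : EuclideanSpace ℝ (Fin n) => |w ‖y‖| ^ (p-1) * |w ‖y‖|) = fun y => |w ‖y‖| ^ p := by
      funext y
      have := Real.rpow_add_one' (abs_nonneg (w ‖y‖)) (y := p-1) (by linarith)
      rw [← this]; congr 1; ring
    rw [h5] at o4
    simp only [one_mul] at o4
    exact o4.of_norm_right
  -- derivative at nonzeros
  have hFd : ∀ x, w ‖x‖ ≠ 0 → DifferentiableAt ℝ F x := by
    intro x hx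
    have hx0 := hne x hx
    have hη : gradient u x ≠ 0 := by
      rw [aux_grad u v hv1 hrad x hx0]
      exact smul_ne_zero (div_ne_zero hx (norm_ne_zero_iff.2 hx0)) hx0
    have d1 : DifferentiableAt ℝ (gradient u) x := hgu.differentiable (by norm_num) x
    have d2 : DifferentiableAt ℝ (gradient φ) x := hgφ.differentiable (by norm_num) x
    have d3 : ∀ q : ℝ, DifferentiableAt ℝ (fun y => ‖gradient u y‖ ^ q) x := fun q =>
      (d1.norm ℝ hη).rpow_const (Or.inl (norm_ne_zero_iff.2 hη))
    simp only [hF, pAmul]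
    exact ((d3 _).smul d2).add ((((d3 _).const_mul _).mul (d1.inner ℝ d2)).smul d1)
  have hgd : ∀ x, x ≠ 0 → HasFDerivAt g
      ((2 * ζ ‖x‖ * (φ x)⁻¹ * (ζ' ‖x‖ / ‖x‖)) • innerSL ℝ x
        - (ζ ‖x‖ ^ 2 * ((φ x)⁻¹) ^ 2) • fderiv ℝ φ x) x := by
    intro x hx
    have e1 := (aux_radial_fderiv ζ _ x hx (hζd ‖x‖)).pow 2
    have e2 := (hasDerivAt_inv (hφ0 x)).comp_hasFDerivAt x (hφd x).hasFDerivAt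
    refine (e1.mul e2).congr_fderiv ?_
    ext y
    simp
    ring
  have hGd : Differentiable ℝ G := by
    intro x
    by_cases hx : w ‖x‖ = 0
    · exact (hG0 x hx).differentiableAt
    · exact (hgd x (hne x hx)).differentiableAt.smul (hFd x hx)
  have hGc : HasCompactSupport G := by
    apply HasCompactSupport.intro (isCompact_closedBall (0 : EuclideanSpace ℝ (Fin n)) R)
    intro x hx
    exact hGsupp x (by simpa using hx)
  have hS0 : ∀ x, w ‖x‖ = 0 → vdiv G x = 0 := by
    intro x hx
    simp [vdiv, (hG0 x hx).fderiv]
  have hS1 : ∀ x, w ‖x‖ ≠ 0 → vdiv G x = -(b x / φ x * ζ ‖x‖ ^ 2)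
      + |w ‖x‖| ^ (p-2) * (2 * (p - 1) * ζ ‖x‖ * ζ' ‖x‖ * (⟪x, gradient φ x⟫ / ‖x‖) / φ x
        - ζ ‖x‖ ^ 2 * (‖gradient φ x‖ ^ 2 + (p - 2) * (⟪x, gradient φ x⟫ / ‖x‖) ^ 2) / φ x ^ 2) := by
    intro x hx
    have hx0 := hne x hx
    have hx' : ‖x‖ ≠ 0 := norm_ne_zero_iff.2 hx0
    have hφx := hφ0 x
    rw [hG, aux_vdiv_smul g F x (hgd x hx0).differentiableAt (hFd x hx), (hgd x hx0).fderiv]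
    have h1 : vdiv F x = - b x := by rw [← heq x]; simp [hF]
    have h2 : F x = |w ‖x‖| ^ (p - 2) • (gradient φ x + ((p - 2) * (⟪x, gradient φ x⟫ / ‖x‖) / ‖x‖) • x) := by
      simp only [hF]
      rw [aux_grad u v hv1 hrad x hx0]
      exact aux_pAmul p _ hx x _ hx0
    rw [h1, h2]
    simp only [sub_apply, smul_apply, aux_grad_inner,
      innerSL_apply_apply, real_inner_smul_right, inner_add_right, real_inner_self_eq_norm_sq, smul_eq_mul,
      real_inner_comm x (gradient φ x), hg]
    rw [real_inner_comm (gradient φ x) x]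
    field_simp
    ring
  have hβ : ∀ x : EuclideanSpace ℝ (Fin n), x ≠ 0 → |⟪x, gradient φ x⟫ / ‖x‖| ≤ ‖gradient φ x‖ := by
    intro x hx
    have hx' : 0 < ‖x‖ := norm_pos_iff.2 hx
    rw [abs_div, abs_norm, div_le_iff₀ hx', mul_comm]
    exact abs_real_inner_le_norm _ _
  have hSint : Integrable (fun x => vdiv G x) := by
    set B : EuclideanSpace ℝ (Fin n) → ℝ := fun x => |b x| * |φ x|⁻¹ * (w ‖x‖ * f ‖x‖) ^ 2
      + 2 * (p - 1) * |w ‖x‖| ^ (p-1) * |f ‖x‖| * |ζ' ‖x‖| * ‖gradient φ x‖ * |φ x|⁻¹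
      + |w ‖x‖| ^ p * f ‖x‖ ^ 2 * (1 + |p - 2|) * ‖gradient φ x‖ ^ 2 * (|φ x|⁻¹) ^ 2 with hB
    have hBc : Continuous B := by
      have c1 : Continuous fun y => |φ y|⁻¹ := hφc.abs.inv₀ fun y => abs_ne_zero.2 (hφ0 y)
      have c2 : Continuous fun y : EuclideanSpace ℝ (Fin n) => |w ‖y‖| ^ (p-1) := hp1.comp continuous_norm
      have c3 : Continuous fun y : EuclideanSpace ℝ (Fin n) => |w ‖y‖| ^ p := hp0.comp continuous_norm
      have c4 : Continuous ζ' := by fun_prop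
      fun_prop
    have hBs : HasCompactSupport B := by
      apply HasCompactSupport.intro (isCompact_closedBall (0 : EuclideanSpace ℝ (Fin n)) R)
      intro x hx
      have : f ‖x‖ = 0 := hfR _ (by simpa using hx)
      simp [hB, this]
    refine (hBc.integrable_of_hasCompactSupport hBs).mono' ?_ (.of_forall fun x => ?_)
    · apply Measurable.aestronglyMeasurable
      unfold vdiv
      refine Finset.measurable_sum _ fun i _ => ?_
      have m1 : Measurable fun x => fderiv ℝ G x (EuclideanSpace.single i 1) :=
        measurable_fderiv_apply_const ℝ G _
      have m2 : Continuous fun z : EuclideanSpace ℝ (Fin n) => z i := by fun_prop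
      exact m2.measurable.comp m1
    · by_cases hx : w ‖x‖ = 0
      · rw [hS0 x hx]
        have : 0 ≤ p - 1 := by linarith
        simp only [norm_zero, hB]; positivity
      · rw [hS1 x hx]
        have hβx := hβ x (hne x hx)
        set β := ⟪x, gradient φ x⟫ / ‖x‖
        have hp1' : 0 ≤ p - 1 := by linarith
        have t1 : |b x / φ x * ζ ‖x‖ ^ 2| = |b x| * |φ x|⁻¹ * (w ‖x‖ * f ‖x‖) ^ 2 := by
          rw [abs_mul, abs_div, abs_of_nonneg (sq_nonneg (ζ ‖x‖))]; rfl
        have t2 : |(|w ‖x‖| ^ (p-2) * (2 * (p - 1) * ζ ‖x‖ * ζ' ‖x‖ * β / φ x))| ≤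
            2 * (p - 1) * |w ‖x‖| ^ (p-1) * |f ‖x‖| * |ζ' ‖x‖| * ‖gradient φ x‖ * |φ x|⁻¹ := by
          have : |(|w ‖x‖| ^ (p-2) * (2 * (p - 1) * ζ ‖x‖ * ζ' ‖x‖ * β / φ x))| =
            2 * (p - 1) * |w ‖x‖| ^ (p-1) * |f ‖x‖| * |ζ' ‖x‖| * |β| * |φ x|⁻¹ := by
            rw [← aux_pow1 p _ hx]
            simp only [abs_mul, abs_div, hζ, abs_two, abs_of_nonneg hp1']
            rw [abs_of_nonneg (show 0 ≤ |w ‖x‖| ^ (p-2) by positivity)]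
            ring
          rw [this]
          gcongr
        have t3 : |(|w ‖x‖| ^ (p-2) * (ζ ‖x‖ ^ 2 * (‖gradient φ x‖ ^ 2 + (p - 2) * β ^ 2) / φ x ^ 2))| ≤
            |w ‖x‖| ^ p * f ‖x‖ ^ 2 * (1 + |p - 2|) * ‖gradient φ x‖ ^ 2 * (|φ x|⁻¹) ^ 2 := by
          have e1 : |(|w ‖x‖| ^ (p-2) * (ζ ‖x‖ ^ 2 * (‖gradient φ x‖ ^ 2 + (p - 2) * β ^ 2) / φ x ^ 2))| =
            |w ‖x‖| ^ p * f ‖x‖ ^ 2 * |‖gradient φ x‖ ^ 2 + (p - 2) * β ^ 2| * (|φ x|⁻¹) ^ 2 := by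
            rw [← aux_pow2' p _ hx]
            simp only [abs_mul, abs_div, hζ, abs_pow]
            rw [abs_of_nonneg (show 0 ≤ |w ‖x‖| ^ (p-2) by positivity), mul_pow, sq_abs, sq_abs]
            ring
          have e2 : |‖gradient φ x‖ ^ 2 + (p - 2) * β ^ 2| ≤ (1 + |p - 2|) * ‖gradient φ x‖ ^ 2 := by
            refine (abs_add_le _ _).trans ?_
            rw [abs_mul, abs_of_nonneg (sq_nonneg β), abs_of_nonneg (sq_nonneg ‖gradient φ x‖), add_mul, one_mul]
            have : β ^ 2 ≤ ‖gradient φ x‖ ^ 2 := by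
              rw [← sq_abs β]; gcongr
            gcongr
          rw [e1, mul_assoc _ (1 + |p - 2|)]
          gcongr
        rw [Real.norm_eq_abs, mul_sub]
        refine (abs_add_le _ _).trans ?_
        rw [abs_neg, t1]
        have := (abs_sub (|w ‖x‖| ^ (p-2) * (2 * (p - 1) * ζ ‖x‖ * ζ' ‖x‖ * β / φ x))
          (|w ‖x‖| ^ (p-2) * (ζ ‖x‖ ^ 2 * (‖gradient φ x‖ ^ 2 + (p - 2) * β ^ 2) / φ x ^ 2)))
        simp only [hB]
        linarith
  refine ⟨fun x => vdiv G x, hSint, aux_div_zero hn G hGd hGc hSint, ?_, hS0⟩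
  intro x hx
  show vdiv G x ≤ _
  rw [hS1 x hx]
  have hβx := hβ x (hne x hx)
  set β := ⟪x, gradient φ x⟫ / ‖x‖
  have hβ2 : β ^ 2 ≤ ‖gradient φ x‖ ^ 2 := by rw [← sq_abs β]; gcongr
  have ha : 0 ≤ |w ‖x‖| ^ (p-2) := by positivity
  have key : 2 * (p - 1) * ζ ‖x‖ * ζ' ‖x‖ * β / φ x
        - ζ ‖x‖ ^ 2 * (‖gradient φ x‖ ^ 2 + (p - 2) * β ^ 2) / φ x ^ 2 ≤ (p - 1) * ζ' ‖x‖ ^ 2 := by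
    have k1 : (ζ ‖x‖ / φ x) ^ 2 * ((p - 1) * β ^ 2) ≤
        (ζ ‖x‖ / φ x) ^ 2 * (‖gradient φ x‖ ^ 2 + (p - 2) * β ^ 2) :=
      mul_le_mul_of_nonneg_left (by linarith) (sq_nonneg _)
    have k2 : 0 ≤ (p - 1) * (ζ' ‖x‖ - ζ ‖x‖ / φ x * β) ^ 2 :=
      mul_nonneg (by linarith) (sq_nonneg _)
    have k3 : 2 * (p - 1) * ζ ‖x‖ * ζ' ‖x‖ * β / φ x
        - ζ ‖x‖ ^ 2 * (‖gradient φ x‖ ^ 2 + (p - 2) * β ^ 2) / φ x ^ 2 =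
        2 * (p - 1) * (ζ ‖x‖ / φ x) * ζ' ‖x‖ * β
        - (ζ ‖x‖ / φ x) ^ 2 * (‖gradient φ x‖ ^ 2 + (p - 2) * β ^ 2) := by ring
    rw [k3]
    nlinarith
  have := mul_le_mul_of_nonneg_left key ha
  have e : (p - 1) * |w ‖x‖| ^ (p - 2) * (w' ‖x‖ * f ‖x‖ + w ‖x‖ * f' ‖x‖) ^ 2 =
    |w ‖x‖| ^ (p-2) * ((p - 1) * ζ' ‖x‖ ^ 2) := by simp only [hζ']; ring
  rw [e]
  have e2 : w ‖x‖ * f ‖x‖ = ζ ‖x‖ := rfl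
  rw [e2]
  linarith

lemma aux_amgm {m : ℕ} (a : Fin m → Fin m → ℝ) (φ ζ : Fin m → ℝ) (hφ : ∀ i, φ i ≠ 0)
    (hpos : ∀ i j, 0 < a i j * φ i * φ j) :
    ∑ i, ∑ j, √(a i j * a j i) * ζ i * ζ j ≤ ∑ i, (∑ j, a i j * φ j) / φ i * ζ i ^ 2 := by
  set t : Fin m → Fin m → ℝ := fun i j => a i j * φ j / φ i with ht
  have htp : ∀ i j, 0 < t i j := by
    intro i j
    have h1 : t i j = (a i j * φ i * φ j) / φ i ^ 2 := by
      have := hφ i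
      simp only [ht]; field_simp
    rw [h1]
    exact div_pos (hpos i j) (by have := hφ i; positivity)
  have hpair : ∀ i j, 2 * (√(a i j * a j i) * ζ i * ζ j) ≤ t i j * ζ i ^ 2 + t j i * ζ j ^ 2 := by
    intro i j
    have h1 : a i j * a j i = t i j * t j i := by
      have := hφ i
      have := hφ j
      simp only [ht]; field_simp
    rw [h1, Real.sqrt_mul (htp i j).le]
    have e1 := Real.sq_sqrt (htp i j).le
    have e2 := Real.sq_sqrt (htp j i).le
    have := sq_nonneg (√(t i j) * ζ i - √(t j i) * ζ j)
    nlinarith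
  have h1 : ∑ i, (∑ j, a i j * φ j) / φ i * ζ i ^ 2 = ∑ i, ∑ j, t i j * ζ i ^ 2 := by
    refine Finset.sum_congr rfl fun i _ => ?_
    rw [Finset.sum_div, Finset.sum_mul]
  have h2 : ∑ i, ∑ j, t i j * ζ i ^ 2 = ∑ i, ∑ j, t j i * ζ j ^ 2 := Finset.sum_comm
  have h3 : ∑ i, ∑ j, 2 * (√(a i j * a j i) * ζ i * ζ j) ≤
      ∑ i, ∑ j, (t i j * ζ i ^ 2 + t j i * ζ j ^ 2) :=
    Finset.sum_le_sum fun i _ => Finset.sum_le_sum fun j _ => hpair i j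
  simp only [Finset.sum_add_distrib, ← Finset.mul_sum] at h3
  rw [← h2] at h3
  rw [h1]
  linarith

lemma aux_cont_int {n : ℕ} (hn : 2 ≤ n) (g : ℝ → ℝ) (hg : Continuous g) (R : ℝ)
    (hR : ∀ r, R < r → g r = 0) :
    Integrable (fun x : EuclideanSpace ℝ (Fin n) => g ‖x‖) :=
  aux_radial_integrable hn g (fun r => r * g r) (by fun_prop) R
    (fun r hr => by simp [hR r hr]) (fun _ _ => rfl)

lemma aux_wp_int {n : ℕ} (hn : 2 ≤ n) (p : ℝ) (hp : 1 < p) (w w' χ : ℝ → ℝ)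
    (hw : ∀ r, HasDerivAt w (w' r) r) (hw0 : w 0 = 0) (hχ : Continuous χ) (R : ℝ)
    (hR : ∀ r, R < r → χ r = 0) :
    Integrable (fun x : EuclideanSpace ℝ (Fin n) => |w ‖x‖| ^ p / ‖x‖ ^ 2 * χ ‖x‖) := by
  have hwc : Continuous w := continuous_iff_continuousAt.2 fun r => (hw r).continuousAt
  set s : ℝ → ℝ := dslope w 0
  have hs : Continuous s := by
    rw [continuous_iff_continuousAt]
    intro r
    by_cases hr : r = 0
    · rw [hr]; exact continuousAt_dslope_same.2 (hw 0).differentiableAt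
    · exact (continuousAt_dslope_of_ne hr).2 hwc.continuousAt
  have hp1 : Continuous (fun r => |w r| ^ (p-1)) :=
    hwc.abs.rpow_const fun _ => Or.inr (by linarith)
  refine aux_radial_integrable hn (fun r => |w r| ^ p / r ^ 2 * χ r)
    (fun r => |w r| ^ (p-1) * |s r| * χ r) (by fun_prop) R (fun r hr => by simp [hR r hr]) ?_
  intro r hr
  have h0 : w r = r * s r := by
    have := sub_smul_dslope w 0 r
    simp [hw0] at this
    exact this.symm
  have h1 : |w r| = r * |s r| := by rw [h0, abs_mul, abs_of_pos hr]
  have h2 : |w r| ^ p = |w r| ^ (p-1) * |w r| := by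
    have := Real.rpow_add_one' (abs_nonneg (w r)) (y := p-1) (by linarith)
    simpa using this
  simp only [h2]
  nth_rewrite 2 [h1]
  field_simp

lemma aux_radial_ineq
    (n m : ℕ) (hn : 2 ≤ n) (p : ℝ) (hp : 1 < p)
    (H : Fin m → (Fin m → ℝ) → ℝ) (hH : ∀ i, ContDiff ℝ 1 (H i))
    (u : Fin m → EuclideanSpace ℝ (Fin n) → ℝ)
    (hu : ∀ i, ContDiff ℝ 2 (u i))
    (hsol : ∀ i x, -vdiv (fun y =>
        ‖gradient (u i) y‖ ^ (p - 2) • gradient (u i) y) x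
        = H i (fun j => u j x))
    (v : Fin m → ℝ → ℝ) (hv : ∀ i, ContDiff ℝ 2 (v i))
    (hrad : ∀ i x, u i x = v i ‖x‖)
    (φ : Fin m → EuclideanSpace ℝ (Fin n) → ℝ)
    (hφ : ∀ i, ContDiff ℝ 2 (φ i)) (hφ0 : ∀ i x, φ i x ≠ 0)
    (hφpos : ∀ (i j : Fin m) (x : EuclideanSpace ℝ (Fin n)),
        0 < fderiv ℝ (H i) (fun k => u k x) (Pi.single j 1) * φ i x * φ j x)
    (hφeq : ∀ i x, -vdiv (fun y => pAmul p (gradient (u i) y) (gradient (φ i) y)) x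
        = ∑ j, fderiv ℝ (H i) (fun k => u k x) (Pi.single j 1) * φ j x)
    (a : Fin m → Fin m → ℝ → ℝ)
    (ha : a = fun i j r => fderiv ℝ (H i) (fun k => v k r) (Pi.single j 1))
    (hac : ∀ i j, Continuous (a i j)) (hv0 : ∀ i, deriv (v i) 0 = 0)
    (f f' : ℝ → ℝ)
    (hf : ∀ r, HasDerivAt f (f' r) r) (hf' : Continuous f') (R : ℝ) (hfR : ∀ r, R < r → f r = 0)
    (hfR' : ∀ r, R < r → f' r = 0) (D : ℝ → ℝ)
    (hD : D = fun r => (p - 1) * ∑ i, |deriv (v i) r| ^ p * f' r ^ 2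
      - ((n:ℝ) - 1) * ∑ i, |deriv (v i) r| ^ p / r ^ 2 * f r ^ 2
      + ∑ i, ∑ j, (a i j r - √(a i j r * a j i r)) * deriv (v i) r * deriv (v j) r * f r ^ 2) :
    Integrable (fun x : EuclideanSpace ℝ (Fin n) => D ‖x‖) ∧
      0 ≤ ∫ x : EuclideanSpace ℝ (Fin n), D ‖x‖ := by
  have : Nonempty (Fin n) := ⟨⟨0, by omega⟩⟩
  have : Nontrivial (EuclideanSpace ℝ (Fin n)) := inferInstance
  have hv1 : ∀ i, Differentiable ℝ (v i) := fun i => (hv i).differentiable (by norm_num)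
  have hvC : ∀ i, ContDiff ℝ 1 (deriv (v i)) := fun i => (hv i).iterate_deriv' 1 1
  have hwd : ∀ i r, HasDerivAt (deriv (v i)) (deriv (deriv (v i)) r) r := fun i r =>
    ((hvC i).differentiable (by norm_num) r).hasDerivAt
  have hwc : ∀ i, Continuous (deriv (v i)) := fun i => (hvC i).continuous
  have hw'c : ∀ i, Continuous (deriv (deriv (v i))) := fun i => (hvC i).continuous_deriv le_rfl
  have hfc : Continuous f := continuous_iff_continuousAt.2 fun r => (hf r).continuousAt
  have hp0 : ∀ i, Continuous (fun r => |deriv (v i) r| ^ p) := fun i =>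
    (hwc i).abs.rpow_const fun _ => Or.inr (by linarith)
  have hux : ∀ x, (fun k => u k x) = fun k => v k ‖x‖ := fun x => funext fun k => hrad k x
  have hax : ∀ i j x, fderiv ℝ (H i) (fun k => u k x) (Pi.single j 1) = a i j ‖x‖ := by
    intro i j x; rw [hux, ha]
  simp only [hax] at hφpos hφeq
  -- integrability of D
  have hDint : Integrable (fun x : EuclideanSpace ℝ (Fin n) => D ‖x‖) := by
    rw [hD]
    refine Integrable.add (Integrable.sub ?_ ?_) ?_
    · refine (integrable_finsetSum _ fun i _ => ?_).const_mul _
      exact aux_cont_int hn (fun r => |deriv (v i) r| ^ p * f' r ^ 2) (by fun_prop) R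
        fun r hr => by simp [hfR' r hr]
    · refine (integrable_finsetSum _ fun i _ => ?_).const_mul _
      exact aux_wp_int hn p hp _ _ (fun r => f r ^ 2) (hwd i) (hv0 i) (by fun_prop) R
        fun r hr => by simp [hfR r hr]
    · refine integrable_finsetSum _ fun i _ => integrable_finsetSum _ fun j _ => ?_
      exact aux_cont_int hn (fun r => (a i j r - √(a i j r * a j i r)) * deriv (v i) r * deriv (v j) r * f r ^ 2)
        (by fun_prop) R fun r hr => by simp [hfR r hr]
  refine ⟨hDint, ?_⟩
  -- the ODE part
  have hh : ∀ i r, HasDerivAt (fun r => H i (fun k => v k r)) (∑ j, a i j r * deriv (v j) r) r := by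
    intro i r
    have h1 : HasDerivAt (fun r => (fun k => v k r)) (fun k => deriv (v k) r) r :=
      hasDerivAt_pi.2 fun k => (hv1 k r).hasDerivAt
    have h2 := (((hH i).differentiable (by norm_num)) (fun k => v k r)).hasFDerivAt.comp_hasDerivAt r h1
    refine h2.congr_deriv ?_
    have h3 : (fun k => deriv (v k) r) = ∑ j, deriv (v j) r • (Pi.single j (1:ℝ) : Fin m → ℝ) := by
      funext k
      simp [Finset.sum_apply, Pi.single_apply]
    rw [h3, map_sum]
    refine Finset.sum_congr rfl fun j _ => ?_
    rw [ha]
    simp [mul_comm]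
  have hE := fun i => aux_radial_E hn p hp (deriv (v i)) (deriv (deriv (v i)))
    (fun r => H i (fun k => v k r)) (fun r => ∑ j, a i j r * deriv (v j) r) f f' (hwd i) (hw'c i) (hv0 i)
    (hh i) (by fun_prop) hf hf' R hfR
  choose E hEi hE0 hE1 hE2 using hE
  have hS := fun i => aux_G p hp hn (u i) (φ i) (v i) (hu i) (hv i) (hrad i) (hv0 i) (hφ i) (hφ0 i)
    (fun x => ∑ j, a i j ‖x‖ * φ j x)
    (continuous_finsetSum _ fun j _ => ((hac i j).comp continuous_norm).mul (hφ j).continuous)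
    (hφeq i) f f' hf hf' R hfR
  choose S hSi hS0 hS1 hS2 using hS
  have hae : ∀ᵐ x : EuclideanSpace ℝ (Fin n), ∑ i, S i x ≤ ∑ i, E i ‖x‖ + D ‖x‖ := by
    have n1 : ∀ᵐ x : EuclideanSpace ℝ (Fin n), ∀ i, deriv (v i) ‖x‖ = 0 → deriv (deriv (v i)) ‖x‖ = 0 :=
      ae_all_iff.2 fun i => aux_null hn _ _ (hwd i)
    have n2 : ∀ᵐ x : EuclideanSpace ℝ (Fin n), x ≠ 0 := Measure.ae_ne volume 0
    filter_upwards [n1, n2] with x hx1 hx0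
    have hr : 0 < ‖x‖ := norm_pos_iff.2 hx0
    set r := ‖x‖ with hrdef
    have hi : ∀ i, S i x ≤ E i r - (∑ j, a i j r * φ j x) / φ i x * (deriv (v i) r * f r) ^ 2
        + (∑ j, a i j r * deriv (v j) r) * deriv (v i) r * f r ^ 2
        - ((n:ℝ) - 1) * (|deriv (v i) r| ^ p / r ^ 2 * f r ^ 2)
        + (p - 1) * (|deriv (v i) r| ^ p * f' r ^ 2) := by
      intro i
      by_cases hw : deriv (v i) r = 0
      · rw [hS2 i x hw, hE2 i r hr hw (hx1 i hw), hw]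
        simp [Real.zero_rpow (show p ≠ 0 by linarith)]
      · have s1 := hS1 i x hw
        have hode := aux_ode hn p (u i) (v i) (hv i) (hrad i) x hx0 hw
        have hs := hsol i x
        rw [hode, hux] at hs
        have e1 := hE1 i r hr hw hs.symm
        rw [e1]
        have h3 := aux_pow2' p (deriv (v i) r) hw
        rw [← hrdef] at s1
        refine s1.trans (le_of_eq ?_)
        rw [← h3]
        field_simp
        ring
    have hsum := Finset.sum_le_sum fun i (_ : i ∈ Finset.univ) => hi i
    refine hsum.trans ?_
    have ham := aux_amgm (fun i j => a i j r) (fun i => φ i x) (fun i => deriv (v i) r * f r)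
      (fun i => hφ0 i x) (fun i j => hφpos i j x)
    have e1 : ∑ i, ∑ j, (a i j r - √(a i j r * a j i r)) * deriv (v i) r * deriv (v j) r * f r ^ 2
        = ∑ i, (∑ j, a i j r * deriv (v j) r) * deriv (v i) r * f r ^ 2
          - ∑ i, ∑ j, √(a i j r * a j i r) * (deriv (v i) r * f r) * (deriv (v j) r * f r) := by
      rw [← Finset.sum_sub_distrib]
      refine Finset.sum_congr rfl fun i _ => ?_
      rw [Finset.sum_mul, Finset.sum_mul, ← Finset.sum_sub_distrib]
      refine Finset.sum_congr rfl fun j _ => ?_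
      ring
    rw [hD]
    simp only [e1, Finset.sum_add_distrib, Finset.sum_sub_distrib, ← Finset.mul_sum] 
    linarith
  have hint := integral_mono_ae (integrable_finsetSum _ fun i _ => hSi i)
    ((integrable_finsetSum _ fun i _ => hEi i).add hDint) hae
  rw [integral_finsetSum _ fun i _ => hSi i, integral_add' (integrable_finsetSum _ fun i _ => hEi i) hDint,
    integral_finsetSum _ fun i _ => hEi i] at hint
  simpa [hS0, hE0] using hint

/-- **Radial stability inequality**: if `u` is a radial stable solution of the
p-Laplacian system `-div(|∇uᵢ|^{p-2}∇uᵢ) = Hᵢ(u)` on `ℝⁿ`, `uᵢ(x) = vᵢ(|x|)`, then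
for every bounded compactly supported test function `φ`:
`(n-1) ∑ᵢ ∫ |vᵢ'|^p |x|⁻² φ² ≤ (p-1) ∑ᵢ ∫ |vᵢ'|^p |∇φ|²
  + ∑_{i,j} ∫ (∂ⱼHᵢ(u) - √(∂ⱼHᵢ(u)∂ᵢHⱼ(u))) vᵢ'vⱼ' φ²`. -/
theorem radial_stability_inequality
    (n m : ℕ) (hn : 2 ≤ n) (hm : 1 ≤ m) (p : ℝ) (hp : 1 < p)
    (H : Fin m → (Fin m → ℝ) → ℝ) (hH : ∀ i, ContDiff ℝ 1 (H i))
    (u : Fin m → EuclideanSpace ℝ (Fin n) → ℝ)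
    (hu : ∀ i, ContDiff ℝ 2 (u i))
    (hsol : ∀ i x, -vdiv (fun y =>
        ‖gradient (u i) y‖ ^ (p - 2) • gradient (u i) y) x
        = H i (fun j => u j x))
    -- `u` is radial
    (v : Fin m → ℝ → ℝ) (hv : ∀ i, ContDiff ℝ 2 (v i))
    (hrad : ∀ i x, u i x = v i ‖x‖)
    (hcoupling : ∀ (i j : Fin m) (x : EuclideanSpace ℝ (Fin n)),
      0 < fderiv ℝ (H i) (fun k => u k x) (Pi.single j 1)
        * fderiv ℝ (H j) (fun k => u k x) (Pi.single i 1))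
    -- stability: there is a sign-coherent solution of the linearized system
    (hstable : ∃ φ : Fin m → EuclideanSpace ℝ (Fin n) → ℝ,
      (∀ i, ContDiff ℝ 2 (φ i)) ∧ (∀ i x, φ i x ≠ 0) ∧
      (∀ (i j : Fin m) (x : EuclideanSpace ℝ (Fin n)),
        0 < fderiv ℝ (H i) (fun k => u k x) (Pi.single j 1) * φ i x * φ j x) ∧
      (∀ i x, -vdiv (fun y => pAmul p (gradient (u i) y) (gradient (φ i) y)) x
        = ∑ j, fderiv ℝ (H i) (fun k => u k x) (Pi.single j 1) * φ j x)) :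
    ∀ φ : EuclideanSpace ℝ (Fin n) → ℝ,
      ContDiff ℝ 1 φ → HasCompactSupport φ → (∃ C : ℝ, ∀ x, |φ x| ≤ C) →
      ((n : ℝ) - 1) * ∑ i, ∫ x : EuclideanSpace ℝ (Fin n),
          |deriv (v i) ‖x‖| ^ p * ‖x‖ ^ (-2 : ℝ) * (φ x) ^ 2
        ≤ (p - 1) * (∑ i, ∫ x : EuclideanSpace ℝ (Fin n),
              |deriv (v i) ‖x‖| ^ p * ‖gradient φ x‖ ^ 2)
          + ∑ i, ∑ j, ∫ x : EuclideanSpace ℝ (Fin n),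
              (fderiv ℝ (H i) (fun k => u k x) (Pi.single j 1)
                - Real.sqrt (fderiv ℝ (H i) (fun k => u k x) (Pi.single j 1)
                    * fderiv ℝ (H j) (fun k => u k x) (Pi.single i 1)))
                * deriv (v i) ‖x‖ * deriv (v j) ‖x‖ * (φ x) ^ 2 := by
  obtain ⟨ψ, hψ, hψ0, hψpos, hψeq⟩ := hstable
  intro φ hφ hcs ⟨C, hC⟩
  have : Nonempty (Fin n) := ⟨⟨0, by omega⟩⟩
  have : Nontrivial (EuclideanSpace ℝ (Fin n)) := inferInstance
  have hvC : ∀ i, ContDiff ℝ 1 (deriv (v i)) := fun i => (hv i).iterate_deriv' 1 1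
  have hwd : ∀ i r, HasDerivAt (deriv (v i)) (deriv (deriv (v i)) r) r := fun i r =>
    ((hvC i).differentiable (by norm_num) r).hasDerivAt
  have hwc : ∀ i, Continuous (deriv (v i)) := fun i => (hvC i).continuous
  have hp0 : ∀ i, Continuous (fun r => |deriv (v i) r| ^ p) := fun i =>
    (hwc i).abs.rpow_const fun _ => Or.inr (by linarith)
  have hv0 : ∀ i, deriv (v i) 0 = 0 := fun i =>
    aux_v0 hn (u i) (v i) ((hu i).differentiable (by norm_num)) ((hv i).differentiable (by norm_num))
      (hrad i)
  obtain ⟨a, ha⟩ : ∃ a : Fin m → Fin m → ℝ → ℝ,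
    a = fun i j r => fderiv ℝ (H i) (fun k => v k r) (Pi.single j 1) := ⟨_, rfl⟩
  have hac : ∀ i j, Continuous (a i j) := by
    intro i j
    rw [ha]
    have h1 : Continuous (fun r => (fun k => v k r)) := continuous_pi fun k => (hv k).continuous
    exact (((hH i).continuous_fderiv (by norm_num)).comp h1).clm_apply continuous_const
  have hux : ∀ x, (fun k => u k x) = fun k => v k ‖x‖ := fun x => funext fun k => hrad k x
  have hax : ∀ i j x, fderiv ℝ (H i) (fun k => u k x) (Pi.single j 1) = a i j ‖x‖ := by
    intro i j x; rw [hux, ha]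
  obtain ⟨R, hR⟩ : ∃ R : ℝ, ∀ x, R < ‖x‖ → φ x = 0 := by
    obtain ⟨R, hR⟩ := hcs.isBounded.subset_ball 0
    refine ⟨R, fun x hx => ?_⟩
    by_contra h
    have : ‖x‖ < R := by simpa using hR (subset_tsupport _ h)
    linarith
  have hRg : ∀ x, R < ‖x‖ → gradient φ x = 0 := by
    intro x hx
    have : φ =ᶠ[nhds x] fun _ => 0 := by
      have : ∀ᶠ y in nhds x, R < ‖y‖ :=
        continuous_norm.continuousAt.eventually (lt_mem_nhds hx)
      filter_upwards [this] with y hy using hR y hy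
    rw [gradient, this.fderiv_eq]; simp
  have hgc : Continuous (gradient φ) := by
    unfold gradient
    exact (LinearIsometryEquiv.continuous _).comp (hφ.continuous_fderiv (by norm_num))
  have hφc := hφ.continuous
  have key := fun (θ : EuclideanSpace ℝ (Fin n)) (hθ : ‖θ‖ = 1) =>
    aux_radial_ineq n m hn p hp H hH u hu hsol v hv hrad ψ hψ hψ0 hψpos hψeq a ha hac hv0
      (fun r => φ (r • θ)) (fun r => fderiv ℝ φ (r • θ) θ)
      (by
        intro r
        have h1 : HasDerivAt (fun r : ℝ => r • θ) θ r := by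
          simpa using (hasDerivAt_id r).smul_const θ
        exact ((hφ.differentiable (by norm_num)) (r • θ)).hasFDerivAt.comp_hasDerivAt r h1)
      (((hφ.continuous_fderiv (by norm_num)).comp (by fun_prop)).clm_apply continuous_const) R
      (by
        intro r hr
        refine hR _ ?_
        rw [norm_smul, hθ, mul_one]
        exact hr.trans_le (le_abs_self r))
      (by
        intro r hr
        simp only [aux_grad_inner]
        rw [hRg, inner_zero_left]
        rw [norm_smul, hθ, mul_one]
        exact hr.trans_le (le_abs_self r)) _ rfl
  have hneg : ∀ r : ℝ, 0 ≤ r → r ^ (-2 : ℝ) = (r ^ 2)⁻¹ := by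
    intro r hr
    rw [Real.rpow_neg hr, Real.rpow_two]
  have hpol := aux_polar_nonneg
    (fun x : EuclideanSpace ℝ (Fin n) =>
      (p - 1) * ∑ i, |deriv (v i) ‖x‖| ^ p * ‖gradient φ x‖ ^ 2
      - ((n:ℝ) - 1) * ∑ i, |deriv (v i) ‖x‖| ^ p * ‖x‖ ^ (-2 : ℝ) * (φ x) ^ 2
      + ∑ i, ∑ j, (a i j ‖x‖ - √(a i j ‖x‖ * a j i ‖x‖)) * deriv (v i) ‖x‖ * deriv (v j) ‖x‖ * φ x ^ 2)
    (fun θ r => (p - 1) * ∑ i, |deriv (v i) r| ^ p * (fderiv ℝ φ (r • θ) θ) ^ 2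
      - ((n:ℝ) - 1) * ∑ i, |deriv (v i) r| ^ p / r ^ 2 * φ (r • θ) ^ 2
      + ∑ i, ∑ j, (a i j r - √(a i j r * a j i r)) * deriv (v i) r * deriv (v j) r * φ (r • θ) ^ 2)
    ?_ (fun θ hθ => (key θ hθ).1) (fun θ hθ => (key θ hθ).2)
  swap
  · intro θ hθ r hr
    have hnr : ‖r • θ‖ = r := by rw [norm_smul, hθ, mul_one, Real.norm_of_nonneg hr.le]
    simp only [hnr, hneg r hr.le, ← div_eq_mul_inv]
    have hle : (fderiv ℝ φ (r • θ) θ) ^ 2 ≤ ‖gradient φ (r • θ)‖ ^ 2 := by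
      rw [aux_grad_inner, ← sq_abs]
      have := abs_real_inner_le_norm (gradient φ (r • θ)) θ
      rw [hθ, mul_one] at this
      gcongr
    have : ∑ i, |deriv (v i) r| ^ p * (fderiv ℝ φ (r • θ) θ) ^ 2
        ≤ ∑ i, |deriv (v i) r| ^ p * ‖gradient φ (r • θ)‖ ^ 2 := by
      gcongr
    have := mul_le_mul_of_nonneg_left this (show 0 ≤ p - 1 by linarith)
    linarith
  have hcomp : ∀ g : EuclideanSpace ℝ (Fin n) → ℝ, Continuous g → (∀ x, R < ‖x‖ → g x = 0) →
      Integrable g := fun g hg h0 =>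
    hg.integrable_of_hasCompactSupport (HasCompactSupport.intro (isCompact_closedBall 0 R)
      fun x hx => h0 x (by simpa using hx))
  have I2 : ∀ i, Integrable fun x : EuclideanSpace ℝ (Fin n) =>
      |deriv (v i) ‖x‖| ^ p * ‖gradient φ x‖ ^ 2 := fun i =>
    hcomp _ (((hp0 i).comp continuous_norm).mul (by fun_prop)) fun x hx => by simp [hRg x hx]
  have I3 : ∀ i j, Integrable fun x : EuclideanSpace ℝ (Fin n) =>
      (a i j ‖x‖ - √(a i j ‖x‖ * a j i ‖x‖)) * deriv (v i) ‖x‖ * deriv (v j) ‖x‖ * φ x ^ 2 := fun i j =>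
    hcomp _ (by fun_prop) fun x hx => by simp [hR x hx]
  have I1 : ∀ i, Integrable fun x : EuclideanSpace ℝ (Fin n) =>
      |deriv (v i) ‖x‖| ^ p * ‖x‖ ^ (-2 : ℝ) * (φ x) ^ 2 := by
    intro i
    have h1 := aux_wp_int hn p hp _ _ (fun r => min 1 (max 0 (R + 1 - r))) (hwd i) (hv0 i)
      (by fun_prop) (R + 1) (by
        intro r hr
        rw [max_eq_left (by linarith)]; simp)
    have h2 := h1.mul_bdd (c := C ^ 2) (hφc.pow 2).aestronglyMeasurable
      (Eventually.of_forall fun x => by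
        rw [Pi.pow_apply, Real.norm_of_nonneg (sq_nonneg _), ← sq_abs]
        have := hC x
        gcongr)
    refine h2.congr (Eventually.of_forall fun x => ?_)
    simp only [hneg _ (norm_nonneg x)]
    by_cases hx : R < ‖x‖
    · simp [hR x hx]
    · rw [max_eq_right (by linarith), min_eq_left (by linarith)]
      simp [div_eq_mul_inv]
  simp only [hax]
  have J2 := (integrable_finsetSum Finset.univ fun i _ => I2 i).const_mul (p - 1)
  have J1 := (integrable_finsetSum Finset.univ fun i _ => I1 i).const_mul ((n:ℝ) - 1)
  have J3 := integrable_finsetSum Finset.univ fun i _ =>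
    integrable_finsetSum Finset.univ fun j _ => I3 i j
  have J12 : Integrable (fun x : EuclideanSpace ℝ (Fin n) =>
      (p - 1) * ∑ i, |deriv (v i) ‖x‖| ^ p * ‖gradient φ x‖ ^ 2
      - ((n:ℝ) - 1) * ∑ i, |deriv (v i) ‖x‖| ^ p * ‖x‖ ^ (-2 : ℝ) * (φ x) ^ 2) := J2.sub J1
  rw [integral_add J12 J3, integral_sub J2 J1,
    integral_const_mul, integral_const_mul, integral_finsetSum _ fun i _ => I2 i,
    integral_finsetSum _ fun i _ => I1 i,
    integral_finsetSum _ fun i _ => integrable_finsetSum _ fun j _ => I3 i j] at hpol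
  simp only [fun i => integral_finsetSum Finset.univ fun j _ => I3 i j] at hpol
  linarith
end
end
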